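/- Suppose Γ is a configuration satisfying the Working Conditions, let φ be an embedding of Γ into ℤ^N, and suppose Γ has a bad vertex x with w'(x) ≥ 1. Then the restriction of φ to the vertices of the outside part of Γ is standard. -/

import Mathlib

namespace LensPaper

/-- A finite weighted simple graph: the combinatorial data underlying a configuration
(a disjoint union of weighted linear graphs).  The fact that every connected component
is a path is recorded separately by `Config.IsLinear`. -/
structure Config where
  V : Type
  fin : Fintype V
  deq : DecidableEq V
  graph : SimpleGraph V
  adjDec : DecidableRel graph.Adj
  w : V → ℤ

attribute [instance] Config.fin Config.deq Config.adjDec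

namespace Config

/-- The degree of a vertex. -/
noncomputable def deg (C : Config) (v : C.V) : ℕ := (C.graph.neighborSet v).ncard

/-- A configuration: every component is a path, i.e. all degrees are at most `2` and the
graph is acyclic. -/
def IsLinear (C : Config) : Prop :=
  (∀ v : C.V, C.deg v ≤ 2) ∧ C.graph.IsAcyclic

/-- The adjusted weight `w'(v) = w(v) - deg(v)`. -/
noncomputable def adjw (C : Config) (v : C.V) : ℤ := C.w v - C.deg v

/-- A vertex is bad if it is adjacent to two distinct vertices of positive adjusted
weight. -/
def IsBad (C : Config) (x : C.V) : Prop :=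
  ∃ u v : C.V, u ≠ v ∧ C.graph.Adj x u ∧ C.graph.Adj x v ∧ 0 < C.adjw u ∧ 0 < C.adjw v

/-- A leaf: a vertex of degree at most one. -/
def IsLeaf (C : Config) (v : C.V) : Prop := C.deg v ≤ 1

/-- `v 0, v 1, …, v m` is a chain of consecutive (distinct) vertices. -/
def IsChain (C : Config) (m : ℕ) (v : ℕ → C.V) : Prop :=
  (∀ i ≤ m, ∀ j ≤ m, v i = v j → i = j) ∧ ∀ i < m, C.graph.Adj (v i) (v (i + 1))

/-- The chain `v 0, …, v m` has the list `p` as its sequence of adjusted weights. -/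
def ChainPattern (C : Config) (m : ℕ) (v : ℕ → C.V) (p : List ℤ) : Prop :=
  C.IsChain m v ∧ m + 1 = p.length ∧ ∀ i : Fin p.length, C.adjw (v i) = p.get i

/-- `Γ` contains a chain of consecutive vertices whose adjusted weights, read in order,
form the list `p`. -/
def HasPattern (C : Config) (p : List ℤ) : Prop := ∃ m v, C.ChainPattern m v p

/-- A chain realizing a bad-part pattern `p` (each entry of `p` is an adjusted weight
together with a flag marking the bad positions): the chain has the prescribed adjusted
weights, and the bad vertices of the configuration are exactly the vertices of the chain
in the flagged positions. -/
def IsBadPartChain (C : Config) (p : List (ℤ × Bool)) (m : ℕ) (v : ℕ → C.V) : Prop :=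
  C.IsChain m v ∧ m + 1 = p.length ∧
  (∀ i : Fin p.length, C.adjw (v i) = (p.get i).1) ∧
  (∀ x : C.V, C.IsBad x ↔ ∃ i : Fin p.length, (p.get i).2 = true ∧ v i = x)

end Config

/-- The chains of adjusted weights forbidden by Working Condition VI. -/
def forbiddenPatterns : List (List ℤ) :=
  [[1, 0, 0, 2], [1, 0, 0, 3], [1, 0, 0, 0, 3], [1, 1, 0, 0, 1, 2], [3, 1, 0, 0, 1],
   [1, 0, 1, 2], [1, 0, 1, 3], [1, 1, 0, 2], [1, 1, 0, 1, 1, 2]]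

/-- The bad-part patterns of Working Condition VII; `true` marks the bad positions. -/
def badPatterns : List (List (ℤ × Bool)) :=
  [[(1, false), (0, true), (1, false)],
   [(1, false), (0, true), (2, false)],
   [(1, false), (0, true), (3, false)],
   [(1, false), (1, true), (1, false)],
   [(1, false), (1, true), (2, false)],
   [(1, false), (2, true), (1, false)],
   [(1, false), (0, true), (1, false), (0, true), (1, false)],
   [(1, false), (0, true), (1, false), (0, true), (2, false)],
   [(1, false), (0, true), (1, false), (1, true), (1, false)],
   [(1, false), (0, true), (1, false), (1, true), (2, false)],
   [(1, false), (1, true), (1, true), (1, false)],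
   [(1, false), (1, true), (1, true), (1, true), (1, false)],
   [(1, false), (1, true), (2, true), (1, false)]]

namespace Config

/-- The Working Conditions (I)–(VII). -/
def WorkingConditions (C : Config) : Prop :=
  (∀ v : C.V, 2 ≤ C.w v) ∧
  (∀ v : C.V, C.adjw v ≤ 3) ∧
  (∀ u v : C.V, 1 < C.adjw u → 1 < C.adjw v → u = v) ∧
  (∀ v x : C.V, 1 < C.adjw v → C.IsBad x → C.adjw x = 1 → C.graph.Adj x v) ∧
  ((∃ v : C.V, C.adjw v = 3) →
     ∀ u u' : C.V, C.graph.Adj u u' → C.adjw u = 1 → C.adjw u' = 1 → False) ∧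
  (∀ u v x : C.V, C.graph.Adj u v → C.adjw u = 1 → C.adjw v = 1 →
     C.IsBad x → C.adjw x = 2 → C.graph.Adj x u ∨ C.graph.Adj x v) ∧
  (∀ p ∈ forbiddenPatterns, ¬ C.HasPattern p) ∧
  ((∃ x : C.V, C.IsBad x) → ∃ p ∈ badPatterns, ∃ m v, C.IsBadPartChain p m v)

end Config

/-- The standard inner product on `ℤ^N`. -/
def dot {N : ℕ} (x y : Fin N → ℤ) : ℤ := ∑ i, x i * y i

/-- The support of a vector of `ℤ^N` with respect to the standard orthonormal basis. -/
def supp {N : ℕ} (x : Fin N → ℤ) : Finset (Fin N) :=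
  Finset.univ.filter fun i => x i ≠ 0

namespace Config

/-- An embedding of a configuration into `ℤ^N`. -/
def IsEmbedding (C : Config) (N : ℕ) (φ : C.V → Fin N → ℤ) : Prop :=
  ∀ u v : C.V, dot (φ u) (φ v) =
    if u = v then C.w u else if C.graph.Adj u v then -1 else 0

/-- The restriction of `φ` to `S` is standard. -/
def IsStandardOn (C : Config) (N : ℕ) (φ : C.V → Fin N → ℤ) (S : Set C.V) : Prop :=
  ∀ u ∈ S, ∀ v ∈ S,
    ((supp (φ u) ∩ supp (φ v)).card : ℤ) =
      if u = v then C.w v else if C.graph.Adj u v then 1 else 0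

/-- A standard embedding. -/
def IsStandard (C : Config) (N : ℕ) (φ : C.V → Fin N → ℤ) : Prop :=
  C.IsStandardOn N φ Set.univ

/-- The restriction of `φ` to `S` is semi-standard at `x`. -/
def IsSemiStandardAtOn (C : Config) (N : ℕ) (φ : C.V → Fin N → ℤ) (x : C.V)
    (S : Set C.V) : Prop :=
  (∀ u ∈ S, ∀ v ∈ S,
    ((supp (φ u) ∩ supp (φ v)).card : ℤ) =
      if u = v then C.w v
      else if C.graph.Adj u v then 1
      else if C.graph.Adj x u ∧ C.graph.Adj x v then 2
      else 0) ∧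
  (∀ u ∈ S, ∀ v ∈ S, u ≠ v → C.graph.Adj x u → C.graph.Adj x v →
    (supp (φ u) ∩ supp (φ x) ∩ supp (φ v)).card = 1)

/-- A semi-standard embedding: semi-standard at some bad vertex. -/
def IsSemiStandard (C : Config) (N : ℕ) (φ : C.V → Fin N → ℤ) : Prop :=
  ∃ x : C.V, C.IsBad x ∧ C.IsSemiStandardAtOn N φ x Set.univ

/-- A candidate for the extended bad part: a chain containing the bad part whose two
ends are either leaves or preceded by two consecutive vertices of vanishing adjusted
weight. -/
def IsEBPCand (C : Config) (m : ℕ) (v : ℕ → C.V) : Prop :=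
  C.IsChain m v ∧
  (∀ p ∈ badPatterns, ∀ mb vb, C.IsBadPartChain p mb vb →
     ∀ i ≤ mb, ∃ j ≤ m, v j = vb i) ∧
  (C.IsLeaf (v 0) ∨ (2 ≤ m ∧ C.adjw (v 1) = 0 ∧ C.adjw (v 2) = 0)) ∧
  (C.IsLeaf (v m) ∨ (2 ≤ m ∧ C.adjw (v (m - 1)) = 0 ∧ C.adjw (v (m - 2)) = 0))

/-- The extended bad part: a candidate with the fewest vertices. -/
def IsExtBadPart (C : Config) (m : ℕ) (v : ℕ → C.V) : Prop :=
  C.IsEBPCand m v ∧ ∀ m' v', C.IsEBPCand m' v' → m ≤ m'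

/-- The set of vertices of the chain `v 0, …, v m`. -/
def ebpSet (C : Config) (m : ℕ) (v : ℕ → C.V) : Set C.V := {y | ∃ i ≤ m, v i = y}

/-- The outside part of `Γ` relative to the extended bad part `v 0, …, v m`. -/
def OutsidePart (C : Config) (m : ℕ) (v : ℕ → C.V) : Set C.V :=
  {x | ∀ i ≤ m, v i ≠ x}
  ∪ {x | ¬ C.IsLeaf (v 0) ∧ (x = v 0 ∨ x = v 1 ∨ x = v 2)}
  ∪ {x | ¬ C.IsLeaf (v m) ∧ (x = v m ∨ x = v (m - 1) ∨ x = v (m - 2))}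

/-- A screw at the front end of the extended bad part. -/
def IsFrontScrew (C : Config) (N : ℕ) (φ : C.V → Fin N → ℤ) (m : ℕ) (v : ℕ → C.V)
    (e : Fin N) : Prop :=
  ¬ C.IsLeaf (v 0) ∧ 3 ≤ m ∧ φ (v 2) e ≠ 0 ∧ φ (v 3) e ≠ 0

/-- A screw at the back end of the extended bad part. -/
def IsBackScrew (C : Config) (N : ℕ) (φ : C.V → Fin N → ℤ) (m : ℕ) (v : ℕ → C.V)
    (e : Fin N) : Prop :=
  ¬ C.IsLeaf (v m) ∧ 3 ≤ m ∧ φ (v (m - 2)) e ≠ 0 ∧ φ (v (m - 3)) e ≠ 0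

/-- All screws of `Γ` (with respect to `φ`) are clean. -/
def AllScrewsClean (C : Config) (N : ℕ) (φ : C.V → Fin N → ℤ) (m : ℕ)
    (v : ℕ → C.V) : Prop :=
  (∀ e : Fin N, C.IsFrontScrew N φ m v e →
    ∀ u : C.V, u ≠ v 2 → u ≠ v 3 → φ u e = 0) ∧
  (∀ e : Fin N, C.IsBackScrew N φ m v e →
    ∀ u : C.V, u ≠ v (m - 2) → u ≠ v (m - 3) → φ u e = 0)

end Config

/-!
A bad vertex of positive adjusted weight forces every vertex that is neither bad nor adjacent to a
bad vertex to have weight at most `3`, so its image is a signed sum of two or three standard basis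
vectors. The vertices of the outside part are of this kind. Suppose the supports of two nonadjacent
such vertices meet; by orthogonality they then share exactly two coordinates. For two vertices of
weight `2`, or two of weight `3`, the parity of the number of coordinates shared with a neighbour
leads to a contradiction. If the weights are `2` and `3`, the images are `f₀ - f₁` and
`f₀ + f₁ + g`. Following the path outwards from the two vertices determines each successive image
in turn, and this ends at a bad vertex, at one of the forbidden chains `(1,0,0,2)` and
`(1,1,0,0,1,2)`, or at a vertex of degree `2` whose remaining neighbour has no possible image.
-/

section IntegralVectors

variable {N : ℕ} {x y e : Fin N → ℤ} {l : List (Fin N → ℤ)}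

lemma dot_comm (x y : Fin N → ℤ) : dot x y = dot y x := dotProduct_comm x y

lemma add_dot (x y z : Fin N → ℤ) : dot (x + y) z = dot x z + dot y z := add_dotProduct x y z

lemma sub_dot (x y z : Fin N → ℤ) : dot (x - y) z = dot x z - dot y z := sub_dotProduct x y z

lemma smul_dot (a : ℤ) (x y : Fin N → ℤ) : dot (a • x) y = a * dot x y := smul_dotProduct a x y

lemma single_dot (i : Fin N) (a : ℤ) (x : Fin N → ℤ) : dot (Pi.single i a) x = a * x i :=
  single_dotProduct x a i

lemma mem_supp {i : Fin N} : i ∈ supp x ↔ x i ≠ 0 := by simp [supp]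

lemma dot_self_nonneg (x : Fin N → ℤ) : 0 ≤ dot x x :=
  Finset.sum_nonneg fun i _ ↦ mul_self_nonneg (x i)

lemma dot_eq_zero_of_disjoint_supp (h : Disjoint (supp x) (supp y)) : dot x y = 0 := by
  refine Finset.sum_eq_zero fun i _ ↦ ?_
  by_contra hi
  exact Finset.disjoint_left.1 h (mem_supp.2 (left_ne_zero_of_mul hi))
    (mem_supp.2 (right_ne_zero_of_mul hi))

lemma exists_unit_of_not_disjoint_supp (h : ¬ Disjoint (supp x) (supp y)) :
    ∃ e, dot e e = 1 ∧ 0 < dot e x ∧ dot e y ≠ 0 := by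
  obtain ⟨i, hx, hy⟩ := Finset.not_disjoint_iff.1 h
  rw [mem_supp] at hx hy
  refine ⟨Pi.single i (x i).sign, ?_, ?_, ?_⟩
  · rw [single_dot, Pi.single_eq_same, ← Int.sign_mul, Int.sign_eq_one_iff_pos]
    exact mul_self_pos.2 hx
  · rw [single_dot, Int.sign_mul_self]
    exact_mod_cast Int.natAbs_pos.2 hx
  · rw [single_dot]
    exact mul_ne_zero (by simpa using hx) hy

/-- Orthonormality of a list of integral vectors. The members of such a list are, up to sign,
distinct standard basis vectors, and `dot e x` is the corresponding coordinate of `x`; working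
with them amounts to choosing signs of the standard basis vectors as convenient. -/
def IsOrthonormal (l : List (Fin N → ℤ)) : Prop :=
  l.Pairwise (dot · · = 0) ∧ ∀ e ∈ l, dot e e = 1

lemma isOrthonormal_cons :
    IsOrthonormal (e :: l) ↔ dot e e = 1 ∧ (∀ f ∈ l, dot e f = 0) ∧ IsOrthonormal l := by
  simp only [IsOrthonormal, List.pairwise_cons, List.forall_mem_cons]
  tauto

/-- The orthogonal projection of `x` to the span of an orthonormal list. -/
def proj (l : List (Fin N → ℤ)) (x : Fin N → ℤ) : Fin N → ℤ :=
  (l.map fun e ↦ dot e x • e).sum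

lemma proj_dot (l : List (Fin N → ℤ)) (x y : Fin N → ℤ) :
    dot (proj l x) y = (l.map fun e ↦ dot e x * dot e y).sum := by
  induction l with
  | nil => simp [proj, dot]
  | cons e l ih =>
    simp only [proj, List.map_cons, List.sum_cons] at ih ⊢
    rw [add_dot, smul_dot, ih]

namespace IsOrthonormal

lemma proj_dot_of_mem (hl : IsOrthonormal l) (he : e ∈ l) (x : Fin N → ℤ) :
    dot (proj l x) e = dot e x := by
  rw [proj_dot]
  induction l with
  | nil => simp at he
  | cons f l ih =>
    obtain ⟨hf, hfl, hl⟩ := isOrthonormal_cons.1 hl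
    rw [List.map_cons, List.sum_cons]
    rcases List.mem_cons.1 he with rfl | he
    · have hzero : l.map (fun f ↦ dot f x * dot f e) = l.map fun _ ↦ 0 :=
        List.map_congr_left fun f hf ↦ by rw [dot_comm f e, hfl f hf, mul_zero]
      simp [hzero, hf]
    · rw [hfl e he, mul_zero, zero_add, ih hl he]

lemma dot_proj_proj (hl : IsOrthonormal l) (x : Fin N → ℤ) :
    dot (proj l x) (proj l x) = dot (proj l x) x := by
  rw [proj_dot, proj_dot]
  exact congrArg _ <| List.map_congr_left fun e he ↦ by
    rw [dot_comm e (proj l x), hl.proj_dot_of_mem he]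

lemma dot_self_eq_add (hl : IsOrthonormal l) (x : Fin N → ℤ) :
    dot x x = (l.map fun e ↦ dot e x * dot e x).sum + dot (x - proj l x) (x - proj l x) := by
  rw [sub_dot, dot_comm x (x - _), dot_comm (proj l x) (x - _), sub_dot, sub_dot,
    hl.dot_proj_proj, ← proj_dot, dot_comm x (proj l x)]
  ring

lemma sum_mul_self_le_dot_self (hl : IsOrthonormal l) (x : Fin N → ℤ) :
    (l.map fun e ↦ dot e x * dot e x).sum ≤ dot x x := by
  linarith [hl.dot_self_eq_add x, dot_self_nonneg (x - proj l x)]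

lemma eq_proj_of_dot_self_le (hl : IsOrthonormal l)
    (hx : dot x x ≤ (l.map fun e ↦ dot e x * dot e x).sum) : x = proj l x := by
  have hzero : dot (x - proj l x) (x - proj l x) = 0 := by
    linarith [hl.dot_self_eq_add x, dot_self_nonneg (x - proj l x)]
  exact sub_eq_zero.1 (dotProduct_self_eq_zero.1 hzero)

lemma sum_natAbs_le_dot_self (hl : IsOrthonormal l) (x : Fin N → ℤ) :
    (l.map fun e ↦ ((dot e x).natAbs : ℤ)).sum ≤ dot x x :=
  (List.sum_le_sum fun _ _ ↦ (Int.natAbs_le_self_sq _).trans_eq (sq _)).trans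
    (hl.sum_mul_self_le_dot_self x)

lemma dot_eq_sum (hl : IsOrthonormal l)
    (hx : dot x x ≤ (l.map fun e ↦ ((dot e x).natAbs : ℤ)).sum) (y : Fin N → ℤ) :
    dot x y = (l.map fun e ↦ dot e x * dot e y).sum := by
  rw [← proj_dot, ← hl.eq_proj_of_dot_self_le
    (hx.trans (List.sum_le_sum fun _ _ ↦ (Int.natAbs_le_self_sq _).trans_eq (sq _)))]

lemma cons_of_dot_sub_proj_ne_zero (hl : IsOrthonormal l) (he : dot e e = 1)
    (hx : dot e (x - proj l x) ≠ 0) : IsOrthonormal (e :: l) := by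
  refine isOrthonormal_cons.2 ⟨he, fun f hf ↦ ?_, hl⟩
  by_contra hef
  have hef_sq : dot f f ≤ dot e f * dot e f := by
    rw [hl.2 f hf]
    nlinarith [Int.one_le_abs hef, abs_mul_abs_self (dot e f)]
  have hf_eq : f = proj [e] f :=
    eq_proj_of_dot_self_le (isOrthonormal_cons.2 ⟨he, by simp [IsOrthonormal]⟩) (by simpa)
  have hf_dot : dot f (x - proj l x) = dot e f * dot e (x - proj l x) := by
    conv_lhs => rw [hf_eq, proj_dot]
    simp
  have hf_zero : dot f (x - proj l x) = 0 := by
    rw [dot_comm, sub_dot, hl.proj_dot_of_mem hf, dot_comm x f, sub_self]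
  exact mul_ne_zero hef hx (hf_dot ▸ hf_zero)

lemma exists_cons (hl : IsOrthonormal l)
    (hxy : dot x y ≠ (l.map fun e ↦ dot e x * dot e y).sum) :
    ∃ e, IsOrthonormal (e :: l) ∧ 0 < dot e x ∧ dot e y ≠ 0 := by
  have hdot : dot (x - proj l x) y ≠ 0 := by
    rwa [sub_dot, proj_dot, sub_ne_zero]
  obtain ⟨e, he, hex, hey⟩ := exists_unit_of_not_disjoint_supp fun h ↦
    hdot (dot_eq_zero_of_disjoint_supp h)
  have hcons := hl.cons_of_dot_sub_proj_ne_zero he hex.ne'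
  refine ⟨e, hcons, ?_, hey⟩
  have hproj : dot (proj l x) e = 0 := by
    rw [proj_dot]
    exact List.sum_eq_zero fun a ha ↦ by
      obtain ⟨f, hf, rfl⟩ := List.mem_map.1 ha
      rw [dot_comm f e, (isOrthonormal_cons.1 hcons).2.1 f hf, mul_zero]
  rwa [dot_comm, sub_dot, hproj, sub_zero, dot_comm] at hex

end IsOrthonormal

/-- All coordinates of `x` are `0`, `1` or `-1`. Unit vectors of `ℤ^N` are standard basis vectors
up to sign, so this is a condition on `x i` for all `i`. -/
def IsTernary (x : Fin N → ℤ) : Prop := ∀ e, dot e e = 1 → -1 ≤ dot e x ∧ dot e x ≤ 1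

lemma IsTernary.apply_eq_zero_or_one_or_neg_one (hx : IsTernary x) (i : Fin N) :
    x i = 0 ∨ x i = 1 ∨ x i = -1 := by
  have hi := hx (Pi.single i 1) (by simp [single_dot])
  rw [single_dot, one_mul] at hi
  omega

lemma IsTernary.card_supp (hx : IsTernary x) : ((supp x).card : ℤ) = dot x x := by
  rw [supp, Finset.card_filter, dot, Nat.cast_sum]
  refine Finset.sum_congr rfl fun i _ ↦ ?_
  rcases hx.apply_eq_zero_or_one_or_neg_one i with h | h | h <;> simp [h]

lemma IsTernary.even_card_inter_supp_sub_dot (hx : IsTernary x) (hy : IsTernary y) :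
    Even (((supp x ∩ supp y).card : ℤ) - dot x y) := by
  have hinter : supp x ∩ supp y = Finset.univ.filter fun i ↦ x i ≠ 0 ∧ y i ≠ 0 := by
    ext i
    simp [supp]
  rw [hinter, Finset.card_filter, dot, Nat.cast_sum, ← Finset.sum_sub_distrib,
    even_iff_two_dvd]
  refine Finset.dvd_sum fun i _ ↦ ?_
  rcases hx.apply_eq_zero_or_one_or_neg_one i with h | h | h <;>
    rcases hy.apply_eq_zero_or_one_or_neg_one i with h' | h' | h' <;> simp [h, h']

lemma isTernary_of_dot_self_le_three (hx : dot x x ≤ 3) : IsTernary x := by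
  intro e he
  have hsq : dot e x * dot e x ≤ dot x x := by
    simpa using (isOrthonormal_cons.2 ⟨he, by simp [IsOrthonormal]⟩ :
      IsOrthonormal [e]).sum_mul_self_le_dot_self x
  constructor <;> nlinarith

lemma isTernary_of_dot_eq_neg_one (hx : dot x x ≤ 4) (hxy : dot x y = -1) : IsTernary x := by
  intro e he
  by_contra! hex
  have habs : 2 ≤ |dot e x| := le_abs.2 <| by omega
  have hsq : dot x x ≤ dot e x * dot e x := by
    nlinarith [abs_mul_abs_self (dot e x)]
  have hx_eq : x = proj [e] x :=
    (isOrthonormal_cons.2 ⟨he, by simp [IsOrthonormal]⟩).eq_proj_of_dot_self_le (by simpa)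
  have hmul : dot e x * dot e y = -1 := by
    rw [← hxy]
    conv_rhs => rw [hx_eq, proj_dot]
    simp
  have hunit : IsUnit (dot e x) := isUnit_of_dvd_one ⟨-dot e y, by linarith⟩
  exact absurd (Int.isUnit_iff_abs_eq.1 hunit) (by omega)

end IntegralVectors

section Overlap

variable {N : ℕ} {x y z f₀ f₁ g : Fin N → ℤ}

/-- The shape of two orthogonal ternary vectors `x` and `y` of norms `2` and `3` whose supports
meet: `x = f₀ - f₁` and `y = f₀ + f₁ + g` for suitable signed basis vectors. -/
structure Overlap (x y f₀ f₁ g : Fin N → ℤ) : Prop where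
  isOrthonormal : IsOrthonormal [g, f₀, f₁]
  left_eq : x = f₀ - f₁
  right_eq : y = f₀ + f₁ + g

lemma Overlap.of_dot_eq (h : IsOrthonormal [g, f₀, f₁]) (hxx : dot x x = 2)
    (hyy : dot y y = 3) (hx₀ : dot f₀ x = 1) (hx₁ : dot f₁ x = -1) (hy₀ : dot f₀ y = 1)
    (hy₁ : dot f₁ y = 1) (hyg : dot g y = 1) : Overlap x y f₀ f₁ g where
  isOrthonormal := h
  left_eq := by
    have hproj := (isOrthonormal_cons.1 h).2.2.eq_proj_of_dot_self_le (x := x)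
      (by simp [hxx, hx₀, hx₁])
    simpa [proj, hx₀, hx₁, sub_eq_add_neg] using hproj
  right_eq := by
    have hproj := h.eq_proj_of_dot_self_le (x := y) (by simp [hyy, hy₀, hy₁, hyg])
    simpa [proj, hy₀, hy₁, hyg, add_comm, add_assoc] using hproj

lemma exists_overlap (hx : IsTernary x) (hy : IsTernary y) (hxx : dot x x = 2)
    (hyy : dot y y = 3) (hxy : dot x y = 0) (hsupp : ¬ Disjoint (supp y) (supp x)) :
    ∃ f₀ f₁ g, Overlap x y f₀ f₁ g := by
  obtain ⟨e, he, hey_pos, hex⟩ := exists_unit_of_not_disjoint_supp hsupp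
  have hey : dot e y = 1 := by have := (hy e he).2; omega
  obtain ⟨f, hfe, hfy_pos, hfx⟩ := IsOrthonormal.exists_cons (l := [e]) (x := y) (y := x)
    (isOrthonormal_cons.2 ⟨he, by simp [IsOrthonormal]⟩)
    (by simpa [dot_comm y x, hxy, hey] using hex.symm)
  obtain ⟨hf, hfe_zero, -⟩ := isOrthonormal_cons.1 hfe
  have hfy : dot f y = 1 := by have := (hy f hf).2; omega
  obtain ⟨g, hgfe, hgy_pos, -⟩ := hfe.exists_cons (x := y) (y := y) (by simp [hyy, hey, hfy])
  obtain ⟨hg, hg_zero, -⟩ := isOrthonormal_cons.1 hgfe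
  have hgy : dot g y = 1 := by have := (hy g hg).2; omega
  have hxy_eq : dot f x + dot e x = 0 := by
    have hsum := hfe.dot_eq_sum (x := x)
      (by simp only [List.map_cons, List.map_nil, List.sum_cons, List.sum_nil]; omega) y
    simp only [hxy, List.map_cons, List.map_nil, List.sum_cons, List.sum_nil, hfy, hey] at hsum
    omega
  rcases (show dot e x = 1 ∨ dot e x = -1 by have := hx e he; omega) with hex | hex
  · have hgef : IsOrthonormal [g, e, f] := by
      simp_all [isOrthonormal_cons, dot_comm e f]
    exact ⟨e, f, g, .of_dot_eq hgef hxx hyy hex (by omega) hey hfy hgy⟩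
  · exact ⟨f, e, g, .of_dot_eq hgfe hxx hyy (by omega) hex hfy hey hgy⟩

namespace Overlap

lemma left_dot (h : Overlap x y f₀ f₁ g) (z : Fin N → ℤ) :
    dot x z = dot f₀ z - dot f₁ z := by
  rw [h.left_eq, sub_dot]

lemma right_dot (h : Overlap x y f₀ f₁ g) (z : Fin N → ℤ) :
    dot y z = dot f₀ z + dot f₁ z + dot g z := by
  rw [h.right_eq, add_dot, add_dot]

lemma dot_mem_Icc (h : Overlap x y f₀ f₁ g) (hz : IsTernary z) :
    (-1 ≤ dot f₀ z ∧ dot f₀ z ≤ 1) ∧ (-1 ≤ dot f₁ z ∧ dot f₁ z ≤ 1) ∧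
    (-1 ≤ dot g z ∧ dot g z ≤ 1) :=
  ⟨hz _ (h.isOrthonormal.2 _ (by simp)), hz _ (h.isOrthonormal.2 _ (by simp)),
    hz _ (h.isOrthonormal.2 _ (by simp))⟩

lemma coords_of_left (h : Overlap x y f₀ f₁ g) (hz : IsTernary z)
    (hx : dot x z = -1) (hy : dot y z = 0) :
    (dot f₀ z = 0 ∧ dot f₁ z = 1 ∧ dot g z = -1) ∨
      (dot f₀ z = -1 ∧ dot f₁ z = 0 ∧ dot g z = 1) := by
  have := h.dot_mem_Icc hz
  rw [h.left_dot] at hx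
  rw [h.right_dot] at hy
  omega

lemma coords_of_right (h : Overlap x y f₀ f₁ g) (hz : IsTernary z)
    (hx : dot x z = 0) (hy : dot y z = -1) :
    (dot f₀ z = 0 ∧ dot f₁ z = 0 ∧ dot g z = -1) ∨
      (dot f₀ z = -1 ∧ dot f₁ z = -1 ∧ dot g z = 1) := by
  have := h.dot_mem_Icc hz
  rw [h.left_dot] at hx
  rw [h.right_dot] at hy
  omega

lemma coords_of_both (h : Overlap x y f₀ f₁ g) (hz : IsTernary z)
    (hx : dot x z = -1) (hy : dot y z = -1) :
    dot f₀ z = -1 ∧ dot f₁ z = 0 ∧ dot g z = 0 := by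
  have := h.dot_mem_Icc hz
  rw [h.left_dot] at hx
  rw [h.right_dot] at hy
  omega

lemma coords_of_neither (h : Overlap x y f₀ f₁ g) (hz : IsTernary z)
    (hx : dot x z = 0) (hy : dot y z = 0) :
    dot f₀ z = 0 ∧ dot f₁ z = 0 ∧ dot g z = 0 := by
  have := h.dot_mem_Icc hz
  rw [h.left_dot] at hx
  rw [h.right_dot] at hy
  omega

end Overlap

end Overlap

section PathList

variable {V : Type*} {G : SimpleGraph V} {a b c z : V} {l : List V}

/-- The vertices of a path in `G`, listed in order. -/
def IsPathList (G : SimpleGraph V) (l : List V) : Prop := l.Nodup ∧ l.IsChain G.Adj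

namespace IsPathList

lemma pair (hab : G.Adj a b) : IsPathList G [a, b] := by simp [IsPathList, hab, hab.ne]

lemma reverse (h : IsPathList G l) : IsPathList G l.reverse :=
  ⟨List.nodup_reverse.2 h.1, List.isChain_reverse.2 (h.2.imp fun _ _ hab ↦ hab.symm)⟩

lemma tail (h : IsPathList G (a :: l)) : IsPathList G l := ⟨h.1.of_cons, h.2.tail⟩

lemma adj (h : IsPathList G (a :: b :: l)) : G.Adj a b := h.2.rel

lemma not_adj (h : IsPathList G (a :: b :: l)) (hG : G.IsAcyclic) (hz : z ∈ l) :
    ¬ G.Adj a z := by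
  intro haz
  let p : G.Walk b _ := .ofSupport (b :: l) (List.cons_ne_nil b l) h.2.tail
  have hsupport : (p.cons h.adj).support = a :: b :: l :=
    congrArg (a :: ·) (SimpleGraph.Walk.support_ofSupport _ _)
  have hpath : (p.cons h.adj).IsPath := .mk' (hsupport ▸ h.1)
  have hzb : z = b := by
    simpa using hG.eq_snd_of_adj_start hpath haz (by simp [hsupport, hz])
  exact (List.nodup_cons.1 h.1.of_cons).1 (hzb ▸ hz)

lemma ne (h : IsPathList G (a :: b :: l)) (hz : z ∈ l) : a ≠ z := by
  rintro rfl
  exact (List.nodup_cons.1 h.1).1 (List.mem_cons_of_mem _ hz)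

lemma cons (h : IsPathList G (b :: c :: l)) (hG : G.IsAcyclic) (hab : G.Adj a b) (hac : a ≠ c) :
    IsPathList G (a :: b :: c :: l) := by
  refine ⟨List.nodup_cons.2 ⟨?_, h.1⟩, h.2.cons_cons hab⟩
  simp only [List.mem_cons, not_or]
  exact ⟨hab.ne, hac, fun hal ↦ h.not_adj hG hal hab.symm⟩

end IsPathList

end PathList

namespace Config

variable {C : Config} {u v x y z : C.V}

section Degree

lemma exists_adj_of_deg_ne_zero (hv : C.deg v ≠ 0) : ∃ x, C.graph.Adj x v := by
  obtain ⟨x, hx⟩ := Set.nonempty_of_ncard_ne_zero hv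
  exact ⟨x, hx.symm⟩

lemma exists_adj_ne_of_deg_eq_two (hv : C.deg v = 2) (y : C.V) :
    ∃ x, C.graph.Adj x v ∧ x ≠ y := by
  obtain ⟨x, hx, hxy⟩ := Set.exists_ne_of_one_lt_ncard (s := C.graph.neighborSet v)
    (by rw [← Config.deg, hv]; exact one_lt_two) y
  exact ⟨x, hx.symm, hxy⟩

lemma IsLinear.eq_or_eq_of_adj (hC : C.IsLinear) (hxy : x ≠ y) (hx : C.graph.Adj v x)
    (hy : C.graph.Adj v y) (hz : C.graph.Adj v z) : z = x ∨ z = y := by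
  by_contra! hne
  have hsub : ({x, y, z} : Set C.V) ⊆ C.graph.neighborSet v := by
    simp [Set.insert_subset_iff, hx, hy, hz]
  have hcard := Set.ncard_le_ncard hsub (Set.toFinite _)
  rw [Set.ncard_eq_three.2 ⟨x, y, z, hxy, hne.1.symm, hne.2.symm, rfl⟩] at hcard
  exact absurd (hcard.trans (hC.1 v)) (by norm_num)

lemma IsLeaf.eq_of_adj (hv : C.IsLeaf v) (hx : C.graph.Adj v x) (hy : C.graph.Adj v y) :
    x = y :=
  (Set.ncard_le_one (Set.toFinite _)).1 hv x hx y hy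

lemma IsLinear.exists_cons_isPathList (hC : C.IsLinear) {l : List C.V}
    (h : IsPathList C.graph (x :: y :: l)) (hx : C.deg x = 2) :
    ∃ z, IsPathList C.graph (z :: x :: y :: l) := by
  obtain ⟨z, hz, hzy⟩ := exists_adj_ne_of_deg_eq_two hx y
  exact ⟨z, h.cons hC.2 hz hzy⟩

lemma hasPattern_of_isPathList {l : List C.V} (hl : l ≠ []) (h : IsPathList C.graph l) :
    C.HasPattern (l.map C.adjw) := by
  have hpos := List.length_pos_iff.2 hl
  refine ⟨l.length - 1, fun n ↦ l.getD n (l.head hl),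
    ⟨fun i hi j hj hij ↦ ?_, fun i hi ↦ ?_⟩, by rw [List.length_map]; omega, fun i ↦ ?_⟩
  · dsimp only at hij
    rw [List.getD_eq_getElem _ _ (by omega), List.getD_eq_getElem _ _ (by omega)] at hij
    exact h.1.getElem_inj_iff.1 hij
  · dsimp only
    rw [List.getD_eq_getElem _ _ (by omega), List.getD_eq_getElem _ _ (by omega)]
    exact List.isChain_iff_getElem.1 h.2 i (by omega)
  · have hi : (i : ℕ) < l.length := by simpa using i.2
    simp [List.getElem?_eq_getElem hi]

end Degree

/-- The properties of a configuration that the argument uses; they follow from the Working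
Conditions once some bad vertex has positive adjusted weight. -/
structure IsTame (C : Config) : Prop where
  isLinear : C.IsLinear
  two_le_w : ∀ v, 2 ≤ C.w v
  adjw_le_two : ∀ v, C.adjw v ≤ 2
  isBad_or_adj_isBad : ∀ v, 1 < C.adjw v →
    C.IsBad v ∨ ∃ x, C.IsBad x ∧ C.graph.Adj x v ∧ 0 < C.adjw x
  not_hasPattern_one_zero_zero_two : ¬ C.HasPattern [1, 0, 0, 2]
  not_hasPattern_one_one_zero_zero_one_two : ¬ C.HasPattern [1, 1, 0, 0, 1, 2]

namespace WorkingConditions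

lemma adjw_le_two_of_isBad (hC : C.WorkingConditions) (hx : C.IsBad x) : C.adjw x ≤ 2 := by
  obtain ⟨-, -, -, -, -, -, -, hVII⟩ := hC
  obtain ⟨p, hp, m, v, -, -, hweights, hbad⟩ := hVII ⟨x, hx⟩
  obtain ⟨i, hi, rfl⟩ := (hbad x).1 hx
  have hpatterns : ∀ p ∈ badPatterns, ∀ q ∈ p, q.2 = true → q.1 ≤ 2 := by decide
  exact hweights i ▸ hpatterns p hp _ (List.get_mem _ _) hi

lemma adjw_le_two (hC : C.WorkingConditions) (hx : C.IsBad x) (hwx : 1 ≤ C.adjw x) (v : C.V) :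
    C.adjw v ≤ 2 := by
  obtain ⟨-, hle, hunique, -, hIV, -⟩ := id hC
  by_contra! hv
  have hv : C.adjw v = 3 := by have := hle v; omega
  have hx_le := hC.adjw_le_two_of_isBad hx
  have hwx : C.adjw x = 1 := by
    by_contra hne
    have hvx := hunique v x (by omega) (by omega)
    subst hvx
    omega
  obtain ⟨a, b, hab, hxa, hxb, ha, hb⟩ := hx
  have ha_ne : C.adjw a ≠ 1 := hIV ⟨v, hv⟩ x a hxa hwx
  have hb_ne : C.adjw b ≠ 1 := hIV ⟨v, hv⟩ x b hxb hwx
  exact hab (hunique a b (by omega) (by omega))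

lemma isTame (hC : C.WorkingConditions) (hlin : C.IsLinear) (hx : C.IsBad x)
    (hwx : 1 ≤ C.adjw x) : C.IsTame where
  isLinear := hlin
  two_le_w := hC.1
  adjw_le_two := hC.adjw_le_two hx hwx
  isBad_or_adj_isBad v hv := by
    obtain ⟨-, -, hunique, hIII, -⟩ := hC
    rcases hwx.eq_or_lt with hwx | hwx
    · exact .inr ⟨x, hx, hIII v x hv hx hwx.symm, by omega⟩
    · exact .inl (hunique x v hwx hv ▸ hx)
  not_hasPattern_one_zero_zero_two := hC.2.2.2.2.2.2.1 _ (by decide)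
  not_hasPattern_one_one_zero_zero_one_two := hC.2.2.2.2.2.2.1 _ (by decide)

end WorkingConditions

namespace IsTame

lemma weight_bounds (hC : C.IsTame) (v : C.V) :
    C.w v = C.adjw v + C.deg v ∧ 0 ≤ C.adjw v ∧ C.adjw v ≤ 2 ∧ C.deg v ≤ 2 ∧ 2 ≤ C.w v := by
  have hdeg := hC.isLinear.1 v
  have hw := hC.two_le_w v
  exact ⟨by simp [adjw], by rw [adjw]; omega, hC.adjw_le_two v, hdeg, hw⟩

lemma w_deg_of_adjw_eq_zero (hC : C.IsTame) (hv : C.adjw v = 0) : C.w v = 2 ∧ C.deg v = 2 := by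
  have := hC.weight_bounds v
  omega

end IsTame

lemma IsBad.adjw_pos_of_adj (hx : C.IsBad x) (hC : C.IsLinear) (hxy : C.graph.Adj x y) :
    0 < C.adjw y := by
  obtain ⟨a, b, hab, hxa, hxb, ha, hb⟩ := hx
  rcases hC.eq_or_eq_of_adj hab hxa hxb hxy with rfl | rfl <;> assumption

/-- Neither `v` nor any of its neighbours is bad. -/
def FarFromBad (C : Config) (v : C.V) : Prop :=
  ¬ C.IsBad v ∧ ∀ x, C.graph.Adj x v → ¬ C.IsBad x

/-- A weakening of `FarFromBad` for interior vertices of weight `3`: neighbours of adjusted weight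
`0` may be bad. -/
structure IsMildThree (C : Config) (v : C.V) : Prop where
  w_eq : C.w v = 3
  deg_eq : C.deg v = 2
  not_isBad : ¬ C.IsBad v
  adjw_le_one : ∀ x, C.graph.Adj x v → C.adjw x ≤ 1
  not_isBad_of_adj : ∀ x, C.graph.Adj x v → 0 < C.adjw x → ¬ C.IsBad x

namespace FarFromBad

lemma of_adjw_eq_zero (hC : C.IsLinear) (hv : ¬ C.IsBad v) (hzero : C.adjw v = 0) :
    C.FarFromBad v :=
  ⟨hv, fun _ hxv hx ↦ (hx.adjw_pos_of_adj hC hxv).ne' hzero⟩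

lemma adjw_le_one (hv : C.FarFromBad v) (hC : C.IsTame) : C.adjw v ≤ 1 := by
  by_contra! hlt
  rcases hC.isBad_or_adj_isBad v hlt with hbad | ⟨x, hx, hxv, -⟩
  exacts [hv.1 hbad, hv.2 x hxv hx]

lemma adjw_le_one_of_adj (hv : C.FarFromBad v) (hC : C.IsTame) (hpos : 0 < C.adjw v)
    (hxv : C.graph.Adj x v) : C.adjw x ≤ 1 := by
  by_contra! hlt
  rcases hC.isBad_or_adj_isBad x hlt with hbad | ⟨y, hy, hyx, hy_pos⟩
  · exact hv.2 x hxv hbad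
  · refine hv.2 x hxv ⟨y, v, ?_, hyx.symm, hxv, hy_pos, hpos⟩
    rintro rfl
    exact hv.1 hy

lemma w_eq_two_or_three (hv : C.FarFromBad v) (hC : C.IsTame) : C.w v = 2 ∨ C.w v = 3 := by
  have := hv.adjw_le_one hC
  have := hC.weight_bounds v
  omega

lemma isMildThree (hv : C.FarFromBad v) (hC : C.IsTame) (hw : C.w v = 3) : C.IsMildThree v := by
  have := hv.adjw_le_one hC
  have := hC.weight_bounds v
  exact ⟨hw, by omega, hv.1, fun x ↦ hv.adjw_le_one_of_adj hC (by omega), fun x hx _ ↦ hv.2 x hx⟩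

lemma of_adj_of_w_eq_two (hv : C.FarFromBad v) (hC : C.IsTame) (hxv : C.graph.Adj x v)
    (hx : C.w x = 2) : C.FarFromBad x := by
  rcases (hC.weight_bounds x).2.1.eq_or_lt with hzero | hpos
  · exact of_adjw_eq_zero hC.isLinear (hv.2 x hxv) hzero.symm
  · refine ⟨hv.2 x hxv, fun y hyx ↦ ?_⟩
    have hleaf : C.IsLeaf x := by
      have := hC.weight_bounds x
      rw [IsLeaf]
      omega
    exact hleaf.eq_of_adj hxv hyx.symm ▸ hv.1

lemma isMildThree_of_adj (hv : C.FarFromBad v) (hC : C.IsTame) (hv_pos : 0 < C.adjw v)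
    (hxv : C.graph.Adj x v) (hx : C.w x ≠ 2) : C.IsMildThree x := by
  have hx_le := hv.adjw_le_one_of_adj hC hv_pos hxv
  have hx_bounds := hC.weight_bounds x
  have hx_not_bad := hv.2 x hxv
  have hy_nonpos (y) (hyx : C.graph.Adj y x) (hyv : y ≠ v) : C.adjw y ≤ 0 := by
    by_contra! hpos
    exact hx_not_bad ⟨y, v, hyv, hyx.symm, hxv, hpos, hv_pos⟩
  refine ⟨by omega, by omega, hx_not_bad, fun y hyx ↦ ?_, fun y hyx hpos ↦ ?_⟩ <;>
    rcases eq_or_ne y v with rfl | hyv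
  · exact hv.adjw_le_one hC
  · exact (hy_nonpos y hyx hyv).trans zero_le_one
  · exact hv.1
  · exact absurd hpos (hy_nonpos y hyx hyv).not_gt

end FarFromBad

namespace IsMildThree

lemma adjw_eq_one (hv : C.IsMildThree v) : C.adjw v = 1 := by
  rw [adjw, hv.w_eq, hv.deg_eq]
  rfl

lemma exists_adj_adjw_eq_zero (hv : C.IsMildThree v) (hC : C.IsTame) :
    ∃ x y, x ≠ y ∧ C.graph.Adj x v ∧ C.graph.Adj y v ∧ C.adjw x = 0 := by
  obtain ⟨a, ha⟩ := exists_adj_of_deg_ne_zero (v := v) (by rw [hv.deg_eq]; exact two_ne_zero)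
  obtain ⟨b, hb, hba⟩ := exists_adj_ne_of_deg_eq_two hv.deg_eq a
  have ha_nonneg := (hC.weight_bounds a).2.1
  have hb_nonneg := (hC.weight_bounds b).2.1
  rcases ha_nonneg.eq_or_lt with ha_zero | ha_pos
  · exact ⟨a, b, hba.symm, ha, hb, ha_zero.symm⟩
  rcases hb_nonneg.eq_or_lt with hb_zero | hb_pos
  · exact ⟨b, a, hba, hb, ha, hb_zero.symm⟩
  exact absurd ⟨a, b, hba.symm, ha.symm, hb.symm, ha_pos, hb_pos⟩ hv.not_isBad

end IsMildThree

section Embedding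

variable {N : ℕ} {φ : C.V → Fin N → ℤ}

namespace IsEmbedding

lemma dot_self (hφ : C.IsEmbedding N φ) (v : C.V) : dot (φ v) (φ v) = C.w v := by
  simpa using hφ v v

lemma dot_of_adj (hφ : C.IsEmbedding N φ) (h : C.graph.Adj u v) : dot (φ u) (φ v) = -1 := by
  rw [hφ, if_neg h.ne, if_pos h]

lemma dot_of_not_adj (hφ : C.IsEmbedding N φ) (hne : u ≠ v) (h : ¬ C.graph.Adj u v) :
    dot (φ u) (φ v) = 0 := by
  rw [hφ, if_neg hne, if_neg h]

lemma dot_of_isPathList (hφ : C.IsEmbedding N φ) (hC : C.IsLinear) {l : List C.V}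
    (h : IsPathList C.graph (x :: y :: l)) (hz : z ∈ l) : dot (φ z) (φ x) = 0 := by
  rw [dot_comm]
  exact hφ.dot_of_not_adj (h.ne hz) (h.not_adj hC.2 hz)

lemma sum_natAbs_le_w (hφ : C.IsEmbedding N φ) {l : List (Fin N → ℤ)} (hl : IsOrthonormal l)
    (v : C.V) : (l.map fun e ↦ ((dot e (φ v)).natAbs : ℤ)).sum ≤ C.w v :=
  (hl.sum_natAbs_le_dot_self (φ v)).trans_eq (hφ.dot_self v)

lemma isTernary (hφ : C.IsEmbedding N φ) (hC : C.IsTame) (v : C.V) : IsTernary (φ v) := by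
  have hbounds := hC.weight_bounds v
  by_cases hdeg : C.deg v = 0
  · exact isTernary_of_dot_self_le_three (by rw [hφ.dot_self]; omega)
  · obtain ⟨y, hyv⟩ := exists_adj_of_deg_ne_zero hdeg
    exact isTernary_of_dot_eq_neg_one (by rw [hφ.dot_self]; omega) (hφ.dot_of_adj hyv.symm)

lemma card_supp (hφ : C.IsEmbedding N φ) (hC : C.IsTame) (v : C.V) :
    ((supp (φ v)).card : ℤ) = C.w v := by
  rw [(hφ.isTernary hC v).card_supp, hφ.dot_self]

lemma even_card_inter (hφ : C.IsEmbedding N φ) (hC : C.IsTame) (hne : u ≠ v)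
    (h : ¬ C.graph.Adj u v) : Even (supp (φ u) ∩ supp (φ v)).card := by
  have heven := (hφ.isTernary hC u).even_card_inter_supp_sub_dot (hφ.isTernary hC v)
  rw [hφ.dot_of_not_adj hne h, sub_zero] at heven
  exact_mod_cast heven

lemma odd_card_inter (hφ : C.IsEmbedding N φ) (hC : C.IsTame) (h : C.graph.Adj u v) :
    Odd (supp (φ u) ∩ supp (φ v)).card := by
  have heven := (hφ.isTernary hC u).even_card_inter_supp_sub_dot (hφ.isTernary hC v)
  rw [hφ.dot_of_adj h, sub_neg_eq_add, Int.even_add_one, Int.not_even_iff_odd] at heven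
  exact_mod_cast heven

lemma adj_of_supp_eq (hφ : C.IsEmbedding N φ) (hC : C.IsTame) (hsupp : supp (φ u) = supp (φ v))
    (hux : C.graph.Adj u x) (hvx : v ≠ x) : C.graph.Adj v x := by
  by_contra h
  have hodd := hφ.odd_card_inter hC hux
  rw [hsupp] at hodd
  exact Nat.not_even_iff_odd.2 hodd (hφ.even_card_inter hC hvx h)

section NoCommonNeighbour

variable {s s' t₁ t₂ : C.V} {f₀ f₁ g e k : Fin N → ℤ}

lemma isBad_of_overlap (hφ : C.IsEmbedding N φ) (hC : C.IsTame)
    (h : Overlap (φ u) (φ v) f₀ f₁ g) (hs : C.graph.Adj u s) (hs' : C.graph.Adj u s')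
    (hne : s ≠ s') (hvs : dot (φ v) (φ s) = 0) (hvs' : dot (φ v) (φ s') = 0) : C.IsBad u := by
  have hcoords := h.coords_of_left (hφ.isTernary hC s) (hφ.dot_of_adj hs) hvs
  have hcoords' := h.coords_of_left (hφ.isTernary hC s') (hφ.dot_of_adj hs') hvs'
  have hss' : dot (φ s') (φ s) = 0 :=
    hφ.dot_of_isPathList hC.isLinear ((IsPathList.pair hs').cons hC.isLinear.2 hs.symm hne)
      (by simp)
  obtain ⟨e, he, hes', hes⟩ := h.isOrthonormal.exists_cons (x := φ s') (y := φ s) <| by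
    rcases hcoords with hcoords | hcoords <;> rcases hcoords' with hcoords' | hcoords' <;>
      simp [hss', hcoords, hcoords']
  have hw := hφ.sum_natAbs_le_w he s
  have hw' := hφ.sum_natAbs_le_w he s'
  simp only [List.map_cons, List.map_nil, List.sum_cons, List.sum_nil] at hw hw'
  have hbounds := hC.weight_bounds s
  have hbounds' := hC.weight_bounds s'
  exact ⟨s, s', hne, hs, hs', by omega, by omega⟩

lemma exists_dot_neighbour_eq (hφ : C.IsEmbedding N φ) (hC : C.IsTame)
    (h : Overlap (φ u) (φ v) f₀ f₁ g) (hpath : IsPathList C.graph [t₁, v, t₂])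
    (ht₁ : C.w t₁ = 2) (ht₂ : C.w t₂ ≤ 3) (hut₁ : dot (φ u) (φ t₁) = 0)
    (hut₂ : dot (φ u) (φ t₂) = 0) :
    ∃ e, IsOrthonormal [e, g, f₀, f₁] ∧ (∀ z, dot (φ t₁) z = dot e z - dot g z) ∧
      dot e (φ t₂) = -1 ∧ dot g (φ t₂) = -1 ∧ dot f₀ (φ t₂) = 0 ∧ dot f₁ (φ t₂) = 0 := by
  have hw₁ := hφ.sum_natAbs_le_w h.isOrthonormal t₁
  simp only [List.map_cons, List.map_nil, List.sum_cons, List.sum_nil] at hw₁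
  obtain ⟨hf₀t₁, hf₁t₁, hgt₁⟩ : dot f₀ (φ t₁) = 0 ∧ dot f₁ (φ t₁) = 0 ∧ dot g (φ t₁) = -1 := by
    have := h.coords_of_right (hφ.isTernary hC t₁) hut₁ (hφ.dot_of_adj hpath.adj.symm)
    omega
  obtain ⟨e, he, het₁_pos, -⟩ := h.isOrthonormal.exists_cons (x := φ t₁) (y := φ t₁)
    (by simp [hφ.dot_self, ht₁, hf₀t₁, hf₁t₁, hgt₁])
  have het₁ : dot e (φ t₁) = 1 := by have := hφ.isTernary hC t₁ e (he.2 e (by simp)); omega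
  have ht₁_dot (z) : dot (φ t₁) z = dot e z - dot g z := by
    rw [he.dot_eq_sum (by simp [hφ.dot_self, *])]
    simp [het₁, hf₀t₁, hf₁t₁, hgt₁, sub_eq_add_neg]
  have horth := hφ.dot_of_isPathList hC.isLinear hpath (z := t₂) (by simp)
  rw [dot_comm, ht₁_dot] at horth
  have hcoords := h.coords_of_right (hφ.isTernary hC t₂) hut₂ (hφ.dot_of_adj hpath.tail.adj)
  have hw₂ := hφ.sum_natAbs_le_w he t₂
  simp only [List.map_cons, List.map_nil, List.sum_cons, List.sum_nil] at hw₂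
  exact ⟨e, he, ht₁_dot, by omega, by omega, by omega, by omega⟩

lemma exists_dot_neighbours_eq (hφ : C.IsEmbedding N φ) (hC : C.IsTame)
    (h : Overlap (φ u) (φ v) f₀ f₁ g) (hpath : IsPathList C.graph [t₁, v, t₂])
    (ht₁ : C.adjw t₁ = 0) (ht₂ : C.w t₂ ≤ 3) (hut₁ : dot (φ u) (φ t₁) = 0)
    (hut₂ : dot (φ u) (φ t₂) = 0) :
    C.w t₂ = 3 ∧ ∃ e k, IsOrthonormal [k, e, g, f₀, f₁] ∧
      (∀ z, dot (φ t₁) z = dot e z - dot g z) ∧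
      (∀ z, dot (φ t₂) z = dot k z - dot e z - dot g z) := by
  obtain ⟨ht₁_w, ht₁_deg⟩ := hC.w_deg_of_adjw_eq_zero ht₁
  obtain ⟨e, he, ht₁_dot, het₂, hgt₂, hf₀t₂, hf₁t₂⟩ :=
    hφ.exists_dot_neighbour_eq hC h hpath ht₁_w ht₂ hut₁ hut₂
  have ht₂_w : C.w t₂ = 3 := by
    -- Otherwise `t₂ = -e - g`, and a further neighbour of `t₁` cannot be orthogonal to it.
    by_contra hne
    have ht₂_w : C.w t₂ = 2 := by have := hC.two_le_w t₂; omega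
    have ht₂_dot (z) := he.dot_eq_sum (x := φ t₂) (by simp [hφ.dot_self, *]) z
    obtain ⟨y, hy⟩ := hC.isLinear.exists_cons_isPathList hpath ht₁_deg
    have hyt₁ := hφ.dot_of_adj hy.adj.symm
    have hyt₂ := hφ.dot_of_isPathList hC.isLinear hy (z := t₂) (by simp)
    simp only [ht₂_dot, List.map_cons, List.map_nil, List.sum_cons, List.sum_nil, het₂, hgt₂,
      hf₀t₂, hf₁t₂] at hyt₂
    rw [ht₁_dot] at hyt₁
    omega
  obtain ⟨k, hk, hkt₂_pos, -⟩ := he.exists_cons (x := φ t₂) (y := φ t₂)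
    (by simp [hφ.dot_self, *])
  have hkt₂ : dot k (φ t₂) = 1 := by have := hφ.isTernary hC t₂ k (hk.2 k (by simp)); omega
  refine ⟨ht₂_w, e, k, hk, ht₁_dot, fun z ↦ ?_⟩
  rw [hk.dot_eq_sum (by simp [hφ.dot_self, *])]
  simp only [List.map_cons, List.map_nil, List.sum_cons, List.sum_nil, *]
  ring

lemma adj_of_adj_of_overlap (hφ : C.IsEmbedding N φ) (hC : C.IsTame)
    (h : Overlap (φ u) (φ v) f₀ f₁ g) (hpath : IsPathList C.graph [t₁, v, t₂])
    (hk : IsOrthonormal [k, e, g, f₀, f₁]) (ht₁ : ∀ z, dot (φ t₁) z = dot e z - dot g z)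
    (ht₂ : ∀ z, dot (φ t₂) z = dot k z - dot e z - dot g z) (hs : C.graph.Adj s u)
    (hs_w : C.w s ≤ 3) (hvs : s ≠ v) (hnadj : ¬ C.graph.Adj v s) :
    C.graph.Adj s t₁ ∧ ∀ z, dot (φ s) z = dot k z + dot g z - dot f₀ z := by
  have hcoords := h.coords_of_left (hφ.isTernary hC s) (hφ.dot_of_adj hs.symm)
    (hφ.dot_of_not_adj hvs.symm hnadj)
  have hks := hφ.isTernary hC s k (hk.2 k (by simp))
  have hes := hφ.isTernary hC s e (hk.2 e (by simp))
  have hw := hφ.sum_natAbs_le_w hk s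
  simp only [List.map_cons, List.map_nil, List.sum_cons, List.sum_nil] at hw
  have hst₁ : s ≠ t₁ := by rintro rfl; exact hnadj hpath.adj.symm
  have hst₂ : s ≠ t₂ := by rintro rfl; exact hnadj hpath.tail.adj
  have hst₂_dot := hφ t₂ s
  rw [ht₂, if_neg hst₂.symm] at hst₂_dot
  have hadj : C.graph.Adj s t₁ := by
    by_contra hst₁_adj
    have hst₁_dot := hφ.dot_of_not_adj hst₁.symm (mt SimpleGraph.Adj.symm hst₁_adj)
    rw [ht₁] at hst₁_dot
    split_ifs at hst₂_dot <;> omega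
  have hst₁_dot := hφ.dot_of_adj hadj.symm
  rw [ht₁] at hst₁_dot
  have horth := hφ.dot_of_isPathList hC.isLinear (hpath.cons hC.isLinear.2 hadj hvs)
    (z := t₂) (by simp)
  rw [ht₂] at horth
  obtain ⟨hks, hes, hgs, hf₀s, hf₁s⟩ : dot k (φ s) = 1 ∧ dot e (φ s) = 0 ∧ dot g (φ s) = 1 ∧
      dot f₀ (φ s) = -1 ∧ dot f₁ (φ s) = 0 := by omega
  refine ⟨hadj, fun z ↦ ?_⟩
  rw [hk.dot_eq_sum (by simp [hφ.dot_self, *])]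
  simp only [List.map_cons, List.map_nil, List.sum_cons, List.sum_nil, *]
  ring

lemma deg_ne_two_of_dot_neighbours_eq (hφ : C.IsEmbedding N φ) (hC : C.IsTame)
    (h : Overlap (φ u) (φ v) f₀ f₁ g) (hpath : IsPathList C.graph [t₂, v, t₁, s, u])
    (ht₁ : ∀ z, dot (φ t₁) z = dot e z - dot g z)
    (ht₂ : ∀ z, dot (φ t₂) z = dot k z - dot e z - dot g z)
    (hs : ∀ z, dot (φ s) z = dot k z + dot g z - dot f₀ z) : C.deg t₂ ≠ 2 := by
  intro hdeg
  obtain ⟨y, hy⟩ := hC.isLinear.exists_cons_isPathList hpath hdeg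
  have horth (z) (hz : z ∈ [v, t₁, s, u]) := hφ.dot_of_isPathList hC.isLinear hy hz
  have hcoords := h.coords_of_neither (hφ.isTernary hC y) (horth u (by simp)) (horth v (by simp))
  have hyt₁ := horth t₁ (by simp)
  have hys := horth s (by simp)
  have hyt₂ := hφ.dot_of_adj hy.adj.symm
  rw [ht₁] at hyt₁
  rw [hs] at hys
  rw [ht₂] at hyt₂
  omega

lemma exists_adj_w_le_three_of_overlap (hφ : C.IsEmbedding N φ) (hC : C.IsTame)
    (hu : C.FarFromBad u) (hu_w : C.w u = 2) (h : Overlap (φ u) (φ v) f₀ f₁ g)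
    (hu_dot : ∀ x, C.graph.Adj x u → dot (φ v) (φ x) = 0) :
    ∃ s, C.graph.Adj s u ∧ C.w s ≤ 3 := by
  have hdeg : C.deg u ≠ 2 := by
    intro hdeg
    obtain ⟨s, hs⟩ := exists_adj_of_deg_ne_zero (hdeg ▸ two_ne_zero)
    obtain ⟨s', hs', hne⟩ := exists_adj_ne_of_deg_eq_two hdeg s
    exact hu.1 (hφ.isBad_of_overlap hC h hs.symm hs'.symm hne.symm (hu_dot s hs) (hu_dot s' hs'))
  have hu_adjw := hu.adjw_le_one hC
  have hu_bounds := hC.weight_bounds u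
  obtain ⟨s, hs⟩ := exists_adj_of_deg_ne_zero (v := u) (by omega)
  have hs_adjw := hu.adjw_le_one_of_adj hC (by omega) hs
  have hs_bounds := hC.weight_bounds s
  exact ⟨s, hs, by omega⟩

lemma not_overlap_of_not_adj_common (hφ : C.IsEmbedding N φ) (hC : C.IsTame)
    (hu : C.FarFromBad u) (hu_w : C.w u = 2) (hv : C.IsMildThree v) (hadj : ¬ C.graph.Adj u v)
    (hcommon : ∀ x, C.graph.Adj x u → ¬ C.graph.Adj x v) : ¬ Overlap (φ u) (φ v) f₀ f₁ g := by
  intro h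
  have hv_dot (x) (hx : C.graph.Adj x v) : dot (φ u) (φ x) = 0 :=
    hφ.dot_of_not_adj (by rintro rfl; exact hadj hx) fun hux ↦ hcommon x hux.symm hx
  have hu_dot (x) (hx : C.graph.Adj x u) : dot (φ v) (φ x) = 0 :=
    hφ.dot_of_not_adj (by rintro rfl; exact hadj hx.symm) fun hvx ↦ hcommon x hx hvx.symm
  obtain ⟨t₁, t₂, hne, ht₁, ht₂, ht₁_zero⟩ := hv.exists_adj_adjw_eq_zero hC
  have hpath := (IsPathList.pair ht₂.symm).cons hC.isLinear.2 ht₁ hne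
  have ht₂_adjw := hv.adjw_le_one t₂ ht₂
  have ht₂_bounds := hC.weight_bounds t₂
  obtain ⟨ht₂_w, e, k, hk, ht₁_dot, ht₂_dot⟩ := hφ.exists_dot_neighbours_eq hC h hpath ht₁_zero
    (by omega) (hv_dot t₁ ht₁) (hv_dot t₂ ht₂)
  obtain ⟨s, hs, hs_w⟩ := hφ.exists_adj_w_le_three_of_overlap hC hu hu_w h hu_dot
  have hsv : s ≠ v := by rintro rfl; exact hadj hs.symm
  obtain ⟨hst₁, hs_dot⟩ := hφ.adj_of_adj_of_overlap hC h hpath hk ht₁_dot ht₂_dot hs hs_w hsv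
    fun hvs ↦ hcommon s hs hvs.symm
  have hpath' := (hpath.cons hC.isLinear.2 hst₁ hsv).cons hC.isLinear.2 hs.symm
    (by rintro rfl; exact hadj ht₁)
  exact hφ.deg_ne_two_of_dot_neighbours_eq hC h hpath'.reverse ht₁_dot ht₂_dot hs_dot (by omega)

end NoCommonNeighbour

section CommonNeighbour

variable {u₀ t v₀ s p : C.V} {f₀ f₁ g e k l q : Fin N → ℤ}

lemma adjw_eq_zero_of_overlap (hφ : C.IsEmbedding N φ) (hC : C.IsTame)
    (h : Overlap (φ u) (φ v) f₀ f₁ g) (hpath : IsPathList C.graph [u₀, u, t, v, v₀])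
    (hu : ¬ C.IsBad u) : C.adjw t = 0 := by
  by_contra ht
  have ht_pos : 0 < C.adjw t := by have := (hC.weight_bounds t).2.1; omega
  have hu₀ : C.adjw u₀ ≤ 0 := by
    by_contra! hpos
    exact hu ⟨u₀, t, hpath.ne (by simp), hpath.adj.symm, hpath.tail.adj, hpos, ht_pos⟩
  have hu₀_bounds := hC.weight_bounds u₀
  have hcoords := h.coords_of_left (hφ.isTernary hC u₀) (hφ.dot_of_adj hpath.adj.symm)
    (hφ.dot_of_isPathList hC.isLinear hpath (by simp))
  have hcoords' := h.coords_of_right (hφ.isTernary hC v₀)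
    (hφ.dot_of_isPathList hC.isLinear hpath.tail.reverse (by simp))
    (hφ.dot_of_adj hpath.tail.tail.tail.adj)
  have hdot := h.isOrthonormal.dot_eq_sum (x := φ u₀)
    (by simp only [List.map_cons, List.map_nil, List.sum_cons, List.sum_nil, hφ.dot_self]
        omega) (φ v₀)
  rw [dot_comm, hφ.dot_of_isPathList hC.isLinear hpath (by simp)] at hdot
  rcases hcoords with hcoords | hcoords <;> rcases hcoords' with hcoords' | hcoords' <;>
    simp [hcoords, hcoords'] at hdot

lemma exists_dot_common_neighbour_eq (hφ : C.IsEmbedding N φ) (hC : C.IsTame)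
    (h : Overlap (φ u) (φ v) f₀ f₁ g) (hut : C.graph.Adj u t) (hvt : C.graph.Adj v t)
    (ht : C.w t = 2) :
    ∃ e, IsOrthonormal [e, g, f₀, f₁] ∧ ∀ z, dot (φ t) z = dot e z - dot f₀ z := by
  obtain ⟨hf₀, hf₁, hg⟩ := h.coords_of_both (hφ.isTernary hC t) (hφ.dot_of_adj hut)
    (hφ.dot_of_adj hvt)
  obtain ⟨e, he, hpos, -⟩ := h.isOrthonormal.exists_cons (x := φ t) (y := φ t)
    (by simp [hφ.dot_self, *])
  have het : dot e (φ t) = 1 := by have := hφ.isTernary hC t e (he.2 e (by simp)); omega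
  refine ⟨e, he, fun z ↦ ?_⟩
  rw [he.dot_eq_sum (by simp [hφ.dot_self, *])]
  simp only [List.map_cons, List.map_nil, List.sum_cons, List.sum_nil, *]
  ring

lemma coords_of_right_neighbour (hφ : C.IsEmbedding N φ) (hC : C.IsTame)
    (h : Overlap (φ u) (φ v) f₀ f₁ g) (he : IsOrthonormal [e, g, f₀, f₁])
    (ht_dot : ∀ z, dot (φ t) z = dot e z - dot f₀ z) (hpath : IsPathList C.graph [v₀, v, t, u])
    (hv₀_w : C.w v₀ ≤ 3) :
    dot e (φ v₀) = 0 ∧ dot g (φ v₀) = -1 ∧ dot f₀ (φ v₀) = 0 ∧ dot f₁ (φ v₀) = 0 := by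
  have hcoords := h.coords_of_right (hφ.isTernary hC v₀)
    (hφ.dot_of_isPathList hC.isLinear hpath (by simp)) (hφ.dot_of_adj hpath.adj.symm)
  have hw := hφ.sum_natAbs_le_w he v₀
  have htv₀ := hφ.dot_of_isPathList hC.isLinear hpath (z := t) (by simp)
  simp only [List.map_cons, List.map_nil, List.sum_cons, List.sum_nil, ht_dot] at hw htv₀
  omega

lemma exists_dot_left_neighbour_eq (hφ : C.IsEmbedding N φ) (hC : C.IsTame)
    (h : Overlap (φ u) (φ v) f₀ f₁ g) (hpath : IsPathList C.graph [u₀, u, t, v, v₀])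
    (ht : C.w t = 2) (hu₀_w : C.w u₀ ≤ 3) (hv₀_w : C.w v₀ ≤ 3) :
    C.w u₀ = 3 ∧ ∃ e k, IsOrthonormal [k, e, g, f₀, f₁] ∧
      (∀ z, dot (φ t) z = dot e z - dot f₀ z) ∧
      (∀ z, dot (φ u₀) z = dot k z - dot g z + dot f₁ z) ∧ dot k (φ v₀) = -1 ∧
      dot e (φ v₀) = 0 ∧ dot g (φ v₀) = -1 ∧ dot f₀ (φ v₀) = 0 ∧ dot f₁ (φ v₀) = 0 := by
  obtain ⟨e, he, ht_dot⟩ :=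
    hφ.exists_dot_common_neighbour_eq hC h hpath.tail.adj hpath.tail.tail.adj.symm ht
  obtain ⟨hev₀, hgv₀, hf₀v₀, hf₁v₀⟩ :=
    hφ.coords_of_right_neighbour hC h he ht_dot hpath.tail.reverse hv₀_w
  have hu₀v₀ : dot (φ u₀) (φ v₀) = 0 :=
    hφ.dot_of_isPathList hC.isLinear hpath.reverse (by simp)
  obtain ⟨heu₀, hgu₀, hf₀u₀, hf₁u₀⟩ : dot e (φ u₀) = 0 ∧ dot g (φ u₀) = -1 ∧
      dot f₀ (φ u₀) = 0 ∧ dot f₁ (φ u₀) = 1 := by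
    have htu₀ := hφ.dot_of_isPathList hC.isLinear hpath (z := t) (by simp)
    rw [ht_dot] at htu₀
    rcases h.coords_of_left (hφ.isTernary hC u₀) (hφ.dot_of_adj hpath.adj.symm)
      (hφ.dot_of_isPathList hC.isLinear hpath (by simp)) with hcoords | ⟨hf₀, hf₁, hg⟩
    · omega
    · have heu₀ : dot e (φ u₀) = -1 := by omega
      rw [he.dot_eq_sum (by simp [hφ.dot_self, *])] at hu₀v₀
      simp [*] at hu₀v₀
  obtain ⟨k, hk, hku₀_pos, hkv₀⟩ := he.exists_cons (x := φ u₀) (y := φ v₀) (by simp [*])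
  have hku₀ : dot k (φ u₀) = 1 := by have := hφ.isTernary hC u₀ k (hk.2 k (by simp)); omega
  have hu₀_dot (z) : dot (φ u₀) z = dot k z - dot g z + dot f₁ z := by
    rw [hk.dot_eq_sum (by simp [hφ.dot_self, *])]
    simp only [List.map_cons, List.map_nil, List.sum_cons, List.sum_nil, *]
    ring
  have hw := hφ.sum_natAbs_le_w hk u₀
  simp only [List.map_cons, List.map_nil, List.sum_cons, List.sum_nil] at hw
  rw [hu₀_dot] at hu₀v₀
  exact ⟨by omega, e, k, hk, ht_dot, hu₀_dot, by omega, hev₀, hgv₀, hf₀v₀, hf₁v₀⟩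

lemma coords_of_dot_eq_zero (hφ : C.IsEmbedding N φ) (hC : C.IsTame)
    (h : Overlap (φ u) (φ v) f₀ f₁ g) (ht_dot : ∀ z, dot (φ t) z = dot e z - dot f₀ z)
    (hu : dot (φ u) (φ x) = 0) (hv : dot (φ v) (φ x) = 0) (ht : dot (φ t) (φ x) = 0) :
    dot e (φ x) = 0 ∧ dot g (φ x) = 0 ∧ dot f₀ (φ x) = 0 ∧ dot f₁ (φ x) = 0 := by
  have hcoords := h.coords_of_neither (hφ.isTernary hC x) hu hv
  rw [ht_dot] at ht
  omega

lemma exists_dot_right_neighbour_eq (hφ : C.IsEmbedding N φ) (hC : C.IsTame)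
    (h : Overlap (φ u) (φ v) f₀ f₁ g) (hpath : IsPathList C.graph [s, u₀, u, t, v, v₀])
    (hk : IsOrthonormal [k, e, g, f₀, f₁]) (ht_dot : ∀ z, dot (φ t) z = dot e z - dot f₀ z)
    (hu₀_dot : ∀ z, dot (φ u₀) z = dot k z - dot g z + dot f₁ z) (hkv₀ : dot k (φ v₀) = -1)
    (hev₀ : dot e (φ v₀) = 0) (hgv₀ : dot g (φ v₀) = -1) (hf₀v₀ : dot f₀ (φ v₀) = 0)
    (hf₁v₀ : dot f₁ (φ v₀) = 0) (hv₀_w : C.w v₀ ≤ 3) :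
    ∃ l, IsOrthonormal [l, k, e, g, f₀, f₁] ∧ C.w v₀ = 3 ∧
      (∀ z, dot (φ v₀) z = dot l z - dot k z - dot g z) ∧
      dot l (φ s) = -1 ∧ dot k (φ s) = -1 := by
  have horth (z) (hz : z ∈ [u, t, v, v₀]) := hφ.dot_of_isPathList hC.isLinear hpath hz
  obtain ⟨hes, hgs, hf₀s, hf₁s⟩ := hφ.coords_of_dot_eq_zero hC h ht_dot (horth u (by simp))
    (horth v (by simp)) (horth t (by simp))
  have hks : dot k (φ s) = -1 := by
    have hu₀s := hφ.dot_of_adj hpath.adj.symm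
    rw [hu₀_dot] at hu₀s
    omega
  have hv₀s := horth v₀ (by simp)
  obtain ⟨l, hl, hlv₀_pos, -⟩ := hk.exists_cons (x := φ v₀) (y := φ s) (by simp [*])
  have hlv₀ : dot l (φ v₀) = 1 := by have := hφ.isTernary hC v₀ l (hl.2 l (by simp)); omega
  have hv₀_dot (z) : dot (φ v₀) z = dot l z - dot k z - dot g z := by
    rw [hl.dot_eq_sum (by simp [hφ.dot_self, *])]
    simp only [List.map_cons, List.map_nil, List.sum_cons, List.sum_nil, *]
    ring
  have hw := hφ.sum_natAbs_le_w hl v₀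
  simp only [List.map_cons, List.map_nil, List.sum_cons, List.sum_nil] at hw
  rw [hv₀_dot] at hv₀s
  exact ⟨l, hl, by omega, hv₀_dot, by omega, hks⟩

lemma exists_dot_second_neighbours_eq (hφ : C.IsEmbedding N φ) (hC : C.IsTame)
    (h : Overlap (φ u) (φ v) f₀ f₁ g) (hpath : IsPathList C.graph [p, v₀, v, t, u, u₀, s])
    (hl : IsOrthonormal [l, k, e, g, f₀, f₁]) (ht_dot : ∀ z, dot (φ t) z = dot e z - dot f₀ z)
    (hu₀_dot : ∀ z, dot (φ u₀) z = dot k z - dot g z + dot f₁ z)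
    (hv₀_dot : ∀ z, dot (φ v₀) z = dot l z - dot k z - dot g z) (hls : dot l (φ s) = -1)
    (hks : dot k (φ s) = -1) (hs_w : C.w s ≤ 3) (hp_w : C.w p = 2) :
    ∃ q, C.w s = 3 ∧ (∀ z, dot (φ s) z = dot q z - dot l z - dot k z) ∧
      ∀ z, dot (φ p) z = -dot q z - dot l z := by
  have horth (z) (hz : z ∈ [v, t, u, u₀, s]) := hφ.dot_of_isPathList hC.isLinear hpath hz
  obtain ⟨hep, hgp, hf₀p, hf₁p⟩ := hφ.coords_of_dot_eq_zero hC h ht_dot (horth u (by simp))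
    (horth v (by simp)) (horth t (by simp))
  have hkp : dot k (φ p) = 0 := by
    have hu₀p := horth u₀ (by simp)
    rw [hu₀_dot] at hu₀p
    omega
  have hlp : dot l (φ p) = -1 := by
    have hv₀p := hφ.dot_of_adj hpath.adj.symm
    rw [hv₀_dot] at hv₀p
    omega
  have hsp := horth s (by simp)
  obtain ⟨q, hq, hqs_pos, -⟩ := hl.exists_cons (x := φ s) (y := φ p) (by simp [*])
  have hqs : dot q (φ s) = 1 := by have := hφ.isTernary hC s q (hq.2 q (by simp)); omega
  have hw := hφ.sum_natAbs_le_w hq s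
  simp only [List.map_cons, List.map_nil, List.sum_cons, List.sum_nil] at hw
  obtain ⟨hs_w, hes, hgs, hf₀s, hf₁s⟩ : C.w s = 3 ∧ dot e (φ s) = 0 ∧ dot g (φ s) = 0 ∧
    dot f₀ (φ s) = 0 ∧ dot f₁ (φ s) = 0 := by omega
  have hs_dot (z) : dot (φ s) z = dot q z - dot l z - dot k z := by
    rw [hq.dot_eq_sum (by simp [hφ.dot_self, *])]
    simp only [List.map_cons, List.map_nil, List.sum_cons, List.sum_nil, *]
    ring
  have hqp : dot q (φ p) = -1 := by rw [hs_dot] at hsp; omega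
  refine ⟨q, hs_w, hs_dot, fun z ↦ ?_⟩
  rw [hq.dot_eq_sum (by simp [hφ.dot_self, *])]
  simp only [List.map_cons, List.map_nil, List.sum_cons, List.sum_nil, *]
  ring

lemma deg_ne_two_of_dot_second_neighbours_eq (hφ : C.IsEmbedding N φ) (hC : C.IsTame)
    (h : Overlap (φ u) (φ v) f₀ f₁ g) (hpath : IsPathList C.graph [s, u₀, u, t, v, v₀, p])
    (ht_dot : ∀ z, dot (φ t) z = dot e z - dot f₀ z)
    (hu₀_dot : ∀ z, dot (φ u₀) z = dot k z - dot g z + dot f₁ z)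
    (hv₀_dot : ∀ z, dot (φ v₀) z = dot l z - dot k z - dot g z)
    (hs_dot : ∀ z, dot (φ s) z = dot q z - dot l z - dot k z)
    (hp_dot : ∀ z, dot (φ p) z = -dot q z - dot l z) : C.deg s ≠ 2 := by
  intro hdeg
  obtain ⟨r, hr⟩ := hC.isLinear.exists_cons_isPathList hpath hdeg
  have horth (z) (hz : z ∈ [u₀, u, t, v, v₀, p]) := hφ.dot_of_isPathList hC.isLinear hr hz
  obtain ⟨-, hgr, -, hf₁r⟩ := hφ.coords_of_dot_eq_zero hC h ht_dot (horth u (by simp))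
    (horth v (by simp)) (horth t (by simp))
  have hu₀r := horth u₀ (by simp)
  have hv₀r := horth v₀ (by simp)
  have hpr := horth p (by simp)
  have hsr := hφ.dot_of_adj hr.adj.symm
  rw [hu₀_dot] at hu₀r
  rw [hv₀_dot] at hv₀r
  rw [hp_dot] at hpr
  rw [hs_dot] at hsr
  omega

lemma exists_isPathList_of_common (hφ : C.IsEmbedding N φ) (hC : C.IsTame)
    (hu : C.FarFromBad u) (hv : C.IsMildThree v) (hne : u ≠ v) (hut : C.graph.Adj u t)
    (htv : C.graph.Adj t v) (h : Overlap (φ u) (φ v) f₀ f₁ g) :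
    ∃ u₀ v₀, IsPathList C.graph [u₀, u, t, v, v₀] ∧ C.adjw u = 0 ∧ C.adjw t = 0 ∧
      C.adjw u₀ ≤ 1 := by
  have hv_adjw := hv.adjw_eq_one
  have hu_zero : C.adjw u = 0 := by
    by_contra hpos
    have := (hC.weight_bounds u).2.1
    exact hu.2 t hut.symm ⟨u, v, hne, hut.symm, htv, by omega, by omega⟩
  obtain ⟨u₀, hu₀⟩ := hC.isLinear.exists_cons_isPathList
    ((IsPathList.pair htv).cons hC.isLinear.2 hut hne) (hC.w_deg_of_adjw_eq_zero hu_zero).2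
  obtain ⟨v₀, hv₀⟩ := hC.isLinear.exists_cons_isPathList hu₀.reverse hv.deg_eq
  have ht_zero := hφ.adjw_eq_zero_of_overlap hC h hv₀.reverse hu.1
  refine ⟨u₀, v₀, hv₀.reverse, hu_zero, ht_zero, ?_⟩
  have hu₀_adjw : C.adjw u₀ ≠ 2 := fun hu₀_two ↦ hC.not_hasPattern_one_zero_zero_two <| by
    simpa [hv_adjw, ht_zero, hu_zero, hu₀_two] using
      hasPattern_of_isPathList (by simp) hu₀.reverse
  have := hC.adjw_le_two u₀
  omega

lemma not_overlap_of_adj_common (hφ : C.IsEmbedding N φ) (hC : C.IsTame)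
    (hu : C.FarFromBad u) (hv : C.IsMildThree v) (hne : u ≠ v) (hut : C.graph.Adj u t)
    (htv : C.graph.Adj t v) : ¬ Overlap (φ u) (φ v) f₀ f₁ g := by
  intro h
  obtain ⟨u₀, v₀, hpath, hu_zero, ht_zero, hu₀_adjw⟩ :=
    hφ.exists_isPathList_of_common hC hu hv hne hut htv h
  have hv₀v := hpath.tail.tail.tail.adj.symm
  have hv_adjw := hv.adjw_eq_one
  have hv₀_adjw := hv.adjw_le_one v₀ hv₀v
  have hu₀_bounds := hC.weight_bounds u₀
  have hv₀_bounds := hC.weight_bounds v₀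
  obtain ⟨hu₀_w, e, k, hk, ht_dot, hu₀_dot, hkv₀, hev₀, hgv₀, hf₀v₀, hf₁v₀⟩ :=
    hφ.exists_dot_left_neighbour_eq hC h hpath (hC.w_deg_of_adjw_eq_zero ht_zero).1 (by omega)
      (by omega)
  obtain ⟨s, hs⟩ := hC.isLinear.exists_cons_isPathList hpath (by omega)
  obtain ⟨l, hl, hv₀_w, hv₀_dot, hls, hks⟩ := hφ.exists_dot_right_neighbour_eq hC h hs hk ht_dot
    hu₀_dot hkv₀ hev₀ hgv₀ hf₀v₀ hf₁v₀ (by omega)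
  obtain ⟨p, hp⟩ := hC.isLinear.exists_cons_isPathList hs.reverse (by omega)
  have hp_adjw : C.adjw p ≤ 0 := by
    by_contra! hpos
    exact hv.not_isBad_of_adj v₀ hv₀v (by omega)
      ⟨p, v, hp.ne (by simp), hp.adj.symm, hv₀v, hpos, by omega⟩
  have hs_adjw : C.adjw s ≠ 2 := fun hs_two ↦ hC.not_hasPattern_one_one_zero_zero_one_two <| by
    simpa [hv_adjw, ht_zero, hu_zero, hs_two, show C.adjw u₀ = 1 by omega,
      show C.adjw v₀ = 1 by omega] using hasPattern_of_isPathList (by simp) hs.reverse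
  have hs_bounds := hC.weight_bounds s
  have hp_bounds := hC.weight_bounds p
  obtain ⟨q, hs_w, hs_dot, hp_dot⟩ := hφ.exists_dot_second_neighbours_eq hC h hp hl ht_dot hu₀_dot
    hv₀_dot hls hks (by omega) (by omega)
  exact hφ.deg_ne_two_of_dot_second_neighbours_eq hC h hp.reverse ht_dot hu₀_dot hv₀_dot
    hs_dot hp_dot (by omega)

end CommonNeighbour

section Disjointness

variable {p : C.V} {c d : Fin N}

lemma supp_ne (hφ : C.IsEmbedding N φ) (hC : C.IsTame) (hu : C.FarFromBad u) (hw : C.w u = 2)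
    (hne : u ≠ v) (hadj : ¬ C.graph.Adj u v) : supp (φ u) ≠ supp (φ v) := by
  intro hsupp
  have hnbr (x) (hux : C.graph.Adj u x) : C.graph.Adj v x :=
    hφ.adj_of_supp_eq hC hsupp hux (by rintro rfl; exact hadj hux)
  have hnbr' (x) (hvx : C.graph.Adj v x) : C.graph.Adj u x :=
    hφ.adj_of_supp_eq hC hsupp.symm hvx (by rintro rfl; exact hadj hvx.symm)
  have hdeg : C.deg u = C.deg v :=
    congrArg Set.ncard (Set.ext fun x ↦ ⟨hnbr x, hnbr' x⟩)
  have hv_w : C.w v = 2 := by rw [← hφ.card_supp hC, ← hsupp, hφ.card_supp hC, hw]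
  have hu_le := hu.adjw_le_one hC
  have hu_bounds := hC.weight_bounds u
  have hv_bounds := hC.weight_bounds v
  obtain ⟨x, hxu⟩ := exists_adj_of_deg_ne_zero (v := u) (by omega)
  have hxv := (hnbr x hxu.symm).symm
  have hdeg_ne : C.deg u ≠ 2 := fun hdeg_two ↦ by
    obtain ⟨y, hyu, hyx⟩ := exists_adj_ne_of_deg_eq_two hdeg_two x
    have hpath := ((IsPathList.pair hxv).cons hC.isLinear.2 hxu.symm hne).cons hC.isLinear.2 hyu hyx
    exact hpath.not_adj hC.isLinear.2 (by simp) (hnbr y hyu.symm).symm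
  exact hu.2 x hxu ⟨u, v, hne, hxu, hxv, by omega, by omega⟩

lemma disjoint_supp_of_two_two (hφ : C.IsEmbedding N φ) (hC : C.IsTame) (hu : C.FarFromBad u)
    (hu_w : C.w u = 2) (hv_w : C.w v = 2) (hne : u ≠ v) (hadj : ¬ C.graph.Adj u v) :
    Disjoint (supp (φ u)) (supp (φ v)) := by
  have hu_card := hφ.card_supp hC u
  have hv_card := hφ.card_supp hC v
  rw [Finset.disjoint_iff_inter_eq_empty, ← Finset.card_eq_zero]
  by_contra hpos
  have hcard : 2 ≤ (supp (φ u) ∩ supp (φ v)).card := by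
    obtain ⟨n, hn⟩ := hφ.even_card_inter hC hne hadj
    omega
  refine hφ.supp_ne hC hu hu_w hne hadj ?_
  calc supp (φ u) = supp (φ u) ∩ supp (φ v) :=
        (Finset.eq_of_subset_of_card_le Finset.inter_subset_left (by omega)).symm
    _ = supp (φ v) := Finset.eq_of_subset_of_card_le Finset.inter_subset_right (by omega)

lemma disjoint_supp_of_two_three (hφ : C.IsEmbedding N φ) (hC : C.IsTame) (hu : C.FarFromBad u)
    (hu_w : C.w u = 2) (hv : C.IsMildThree v) (hne : u ≠ v) (hadj : ¬ C.graph.Adj u v) :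
    Disjoint (supp (φ u)) (supp (φ v)) := by
  rw [disjoint_comm]
  by_contra hsupp
  obtain ⟨f₀, f₁, g, h⟩ := exists_overlap (hφ.isTernary hC u) (hφ.isTernary hC v)
    (by rw [hφ.dot_self, hu_w]) (by rw [hφ.dot_self, hv.w_eq]) (hφ.dot_of_not_adj hne hadj) hsupp
  by_cases hcommon : ∃ t, C.graph.Adj u t ∧ C.graph.Adj t v
  · obtain ⟨t, hut, htv⟩ := hcommon
    exact hφ.not_overlap_of_adj_common hC hu hv hne hut htv h
  · exact hφ.not_overlap_of_not_adj_common hC hu hu_w hv hadj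
      (fun x hxu hxv ↦ hcommon ⟨x, hxu.symm, hxv⟩) h

lemma mem_supp_of_sdiff_eq (hφ : C.IsEmbedding N φ) (hC : C.IsTame) (hpu : C.graph.Adj p u)
    (hp : C.FarFromBad p) (hp_w : C.w p = 2) (hu_pos : 0 < C.adjw u) (hv : C.IsMildThree v)
    (hne : u ≠ v) (hadj : ¬ C.graph.Adj u v) (hc : supp (φ u) \ supp (φ v) = {c}) :
    c ∈ supp (φ p) := by
  have hpv : ¬ C.graph.Adj p v := fun hpv ↦
    hp.1 ⟨u, v, hne, hpu, hpv, hu_pos, by rw [hv.adjw_eq_one]; exact one_pos⟩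
  have hdisj := hφ.disjoint_supp_of_two_three hC hp hp_w hv
    (by rintro rfl; exact hadj hpu.symm) hpv
  obtain ⟨i, hi⟩ := Finset.card_pos.1 (hφ.odd_card_inter hC hpu).pos
  obtain ⟨hip, hiu⟩ := Finset.mem_inter.1 hi
  have hic : i ∈ supp (φ u) \ supp (φ v) :=
    Finset.mem_sdiff.2 ⟨hiu, Finset.disjoint_left.1 hdisj hip⟩
  rw [hc, Finset.mem_singleton] at hic
  exact hic ▸ hip

lemma exists_adj_isMildThree_notMem_supp (hφ : C.IsEmbedding N φ) (hC : C.IsTame)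
    (hu : C.FarFromBad u) (hu_w : C.w u = 3) (hv : C.IsMildThree v) (hne : u ≠ v)
    (hadj : ¬ C.graph.Adj u v) (hc : supp (φ u) \ supp (φ v) = {c}) :
    ∃ x, C.graph.Adj x u ∧ C.IsMildThree x ∧ c ∉ supp (φ x) := by
  have hu_three := hu.isMildThree hC hu_w
  have hu_pos : 0 < C.adjw u := hu_three.adjw_eq_one ▸ one_pos
  obtain ⟨p, x, hpx, hpu, hxu, hp_zero⟩ := hu_three.exists_adj_adjw_eq_zero hC
  have hp_w := (hC.w_deg_of_adjw_eq_zero hp_zero).1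
  have hp := hu.of_adj_of_w_eq_two hC hpu hp_w
  have hcp := hφ.mem_supp_of_sdiff_eq hC hpu hp hp_w hu_pos hv hne hadj hc
  have hpx_adj : ¬ C.graph.Adj p x :=
    ((IsPathList.pair hxu.symm).cons hC.isLinear.2 hpu hpx).not_adj hC.isLinear.2 (by simp)
  have hx_w : C.w x ≠ 2 := fun hx_w ↦
    Finset.disjoint_left.1 (hφ.disjoint_supp_of_two_two hC hp hp_w hx_w hpx hpx_adj) hcp
      (hφ.mem_supp_of_sdiff_eq hC hxu (hu.of_adj_of_w_eq_two hC hxu hx_w) hx_w hu_pos hv hne hadj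
        hc)
  have hx := hu.isMildThree_of_adj hC hu_pos hxu hx_w
  exact ⟨x, hxu, hx, Finset.disjoint_left.1
    (hφ.disjoint_supp_of_two_three hC hp hp_w hx hpx hpx_adj) hcp⟩

lemma notMem_supp_of_sdiff_eq (hφ : C.IsEmbedding N φ) (hC : C.IsTame) (hu : C.IsMildThree u)
    (hv : C.FarFromBad v) (hv_w : C.w v = 3) (hne : u ≠ v) (hadj : ¬ C.graph.Adj u v)
    (hd : supp (φ v) \ supp (φ u) = {d}) (hxu : C.graph.Adj x u) (hx : C.IsMildThree x) :
    d ∉ supp (φ x) := by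
  have hv_three := hv.isMildThree hC hv_w
  have hv_pos : 0 < C.adjw v := hv_three.adjw_eq_one ▸ one_pos
  obtain ⟨q, -, -, hqv, -, hq_zero⟩ := hv_three.exists_adj_adjw_eq_zero hC
  have hq_w := (hC.w_deg_of_adjw_eq_zero hq_zero).1
  have hq := hv.of_adj_of_w_eq_two hC hqv hq_w
  have hdq := hφ.mem_supp_of_sdiff_eq hC hqv hq hq_w hv_pos hu hne.symm
    (fun h ↦ hadj h.symm) hd
  have hxv : x ≠ v := by rintro rfl; exact hadj hxu.symm
  have hqx : q ≠ x := by rintro rfl; rw [hx.adjw_eq_one] at hq_zero; exact one_ne_zero hq_zero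
  refine Finset.disjoint_left.1 (hφ.disjoint_supp_of_two_three hC hq hq_w hx hqx fun hqx ↦ ?_) hdq
  exact hq.1 ⟨x, v, hxv, hqx, hqv, hx.adjw_eq_one ▸ one_pos, hv_pos⟩

lemma disjoint_supp_of_three_three (hφ : C.IsEmbedding N φ) (hC : C.IsTame)
    (hu : C.FarFromBad u) (hv : C.FarFromBad v) (hu_w : C.w u = 3) (hv_w : C.w v = 3)
    (hne : u ≠ v) (hadj : ¬ C.graph.Adj u v) : Disjoint (supp (φ u)) (supp (φ v)) := by
  rw [Finset.disjoint_iff_inter_eq_empty, ← Finset.card_eq_zero]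
  by_contra hpos
  have hu_card := Finset.card_inter_add_card_sdiff (supp (φ u)) (supp (φ v))
  have hv_card := Finset.card_inter_add_card_sdiff (supp (φ v)) (supp (φ u))
  rw [Finset.inter_comm] at hv_card
  have hu_card_supp := hφ.card_supp hC u
  have hv_card_supp := hφ.card_supp hC v
  obtain ⟨n, hn⟩ := hφ.even_card_inter hC hne hadj
  obtain ⟨c, hc⟩ := Finset.card_eq_one.1 (show (supp (φ u) \ supp (φ v)).card = 1 by omega)
  obtain ⟨d, hd⟩ := Finset.card_eq_one.1 (show (supp (φ v) \ supp (φ u)).card = 1 by omega)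
  have hu_three := hu.isMildThree hC hu_w
  have hv_three := hv.isMildThree hC hv_w
  obtain ⟨x, hxu, hx, hcx⟩ :=
    hφ.exists_adj_isMildThree_notMem_supp hC hu hu_w hv_three hne hadj hc
  have hdx := hφ.notMem_supp_of_sdiff_eq hC hu_three hv hv_w hne hadj hd hxu hx
  have hxv : ¬ C.graph.Adj x v := fun hxv ↦ hu.2 x hxu
    ⟨u, v, hne, hxu, hxv, hu_three.adjw_eq_one ▸ one_pos, hv_three.adjw_eq_one ▸ one_pos⟩
  have hinter : supp (φ x) ∩ supp (φ u) = supp (φ x) ∩ supp (φ v) := by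
    ext i
    have hic := congrArg (i ∈ ·) hc
    have hid := congrArg (i ∈ ·) hd
    simp only [Finset.mem_sdiff, Finset.mem_singleton, eq_iff_iff] at hic hid
    have : i ∈ supp (φ x) → i ≠ c ∧ i ≠ d := fun hi ↦
      ⟨ne_of_mem_of_not_mem hi hcx, ne_of_mem_of_not_mem hi hdx⟩
    simp only [Finset.mem_inter]
    tauto
  have hodd := hφ.odd_card_inter hC hxu
  rw [hinter] at hodd
  exact Nat.not_even_iff_odd.2 hodd
    (hφ.even_card_inter hC (by rintro rfl; exact hadj hxu.symm) hxv)

lemma card_inter_supp_of_adj (hφ : C.IsEmbedding N φ) (hC : C.IsTame) (hu : C.FarFromBad u)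
    (hv : C.FarFromBad v) (hadj : C.graph.Adj u v) : (supp (φ u) ∩ supp (φ v)).card = 1 := by
  have hu_card := hφ.card_supp hC u
  have hv_card := hφ.card_supp hC v
  have hu_w := hu.w_eq_two_or_three hC
  have hv_w := hv.w_eq_two_or_three hC
  have hu_le := Finset.card_le_card (Finset.inter_subset_left (s₁ := supp (φ u)) (s₂ := supp (φ v)))
  have hv_le :=
    Finset.card_le_card (Finset.inter_subset_right (s₁ := supp (φ u)) (s₂ := supp (φ v)))
  obtain ⟨n, hn⟩ := hφ.odd_card_inter hC hadj
  by_contra hne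
  have hsupp : supp (φ u) = supp (φ v) :=
    calc supp (φ u) = supp (φ u) ∩ supp (φ v) :=
          (Finset.eq_of_subset_of_card_le Finset.inter_subset_left (by omega)).symm
      _ = supp (φ v) := Finset.eq_of_subset_of_card_le Finset.inter_subset_right (by omega)
  have hu_deg := (hu.isMildThree hC (by omega)).deg_eq
  obtain ⟨x, hxu, hxv⟩ := exists_adj_ne_of_deg_eq_two hu_deg v
  have hvx := hφ.adj_of_supp_eq hC hsupp hxu.symm hxv.symm
  exact ((IsPathList.pair hadj).cons hC.isLinear.2 hxu hxv).not_adj hC.isLinear.2 (by simp) hvx.symm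

theorem isStandardOn_farFromBad (hφ : C.IsEmbedding N φ) (hC : C.IsTame) :
    C.IsStandardOn N φ {v | C.FarFromBad v} := by
  intro u hu v hv
  split_ifs with heq hadj
  · rw [heq, Finset.inter_self, hφ.card_supp hC]
  · rw [hφ.card_inter_supp_of_adj hC hu hv hadj, Nat.cast_one]
  · rw [Nat.cast_eq_zero, Finset.card_eq_zero, ← Finset.disjoint_iff_inter_eq_empty]
    rcases hu.w_eq_two_or_three hC, hv.w_eq_two_or_three hC with ⟨hu_w | hu_w, hv_w | hv_w⟩
    · exact hφ.disjoint_supp_of_two_two hC hu hu_w hv_w heq hadj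
    · exact hφ.disjoint_supp_of_two_three hC hu hu_w (hv.isMildThree hC hv_w) heq hadj
    · exact (hφ.disjoint_supp_of_two_three hC hv hv_w (hu.isMildThree hC hu_w) (Ne.symm heq)
        fun h ↦ hadj h.symm).symm
    · exact hφ.disjoint_supp_of_three_three hC hu hv hu_w hv_w heq hadj

end Disjointness

end IsEmbedding

end Embedding

section OutsidePart

variable {m : ℕ} {c : ℕ → C.V}

lemma IsChain.isPathList (hc : C.IsChain m c) :
    IsPathList C.graph ((List.range (m + 1)).map c) := by
  refine ⟨List.Nodup.map_on (fun i hi j hj ↦ ?_) List.nodup_range, ?_⟩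
  · rw [List.mem_range, Nat.lt_succ_iff] at hi hj
    exact hc.1 i hi j hj
  · refine List.isChain_iff_getElem.2 fun i hi ↦ ?_
    rw [List.length_map, List.length_range] at hi
    simpa using hc.2 i (by omega)

lemma IsChain.not_adj_zero (hc : C.IsChain m c) (hC : C.graph.IsAcyclic) {i : ℕ} (hi : 2 ≤ i)
    (him : i ≤ m) : ¬ C.graph.Adj (c 0) (c i) := by
  obtain ⟨n, rfl⟩ : ∃ n, m = n + 1 := ⟨m - 1, by omega⟩
  have hpath := hc.isPathList
  rw [List.range_succ_eq_map, List.range_succ_eq_map] at hpath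
  refine hpath.not_adj hC (List.mem_map.2 ⟨i, ?_, rfl⟩)
  simp only [List.map_map, List.mem_map, List.mem_range, Function.comp_apply]
  exact ⟨i - 2, by omega, by omega⟩

lemma IsChain.reverse (hc : C.IsChain m c) : C.IsChain m fun i ↦ c (m - i) := by
  refine ⟨fun i hi j hj hij ↦ ?_, fun i hi ↦ ?_⟩
  · have := hc.1 _ (m.sub_le i) _ (m.sub_le j) hij
    omega
  · have hadj := hc.2 (m - (i + 1)) (by omega)
    rw [show m - (i + 1) + 1 = m - i by omega] at hadj
    exact hadj.symm

lemma ebpSet_reverse (C : Config) (m : ℕ) (c : ℕ → C.V) :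
    C.ebpSet m (fun i ↦ c (m - i)) = C.ebpSet m c := by
  ext y
  refine ⟨fun ⟨i, _, hy⟩ ↦ ⟨m - i, m.sub_le i, hy⟩, fun ⟨i, hi, hy⟩ ↦ ⟨m - i, m.sub_le i, ?_⟩⟩
  dsimp only
  rw [Nat.sub_sub_self hi, hy]

lemma IsBadPartChain.exists_succ_eq {p : List (ℤ × Bool)} (hc : C.IsBadPartChain p m c)
    (hp : p ∈ badPatterns) (hx : C.IsBad x) : ∃ i, i + 2 ≤ m ∧ c (i + 1) = x := by
  obtain ⟨-, hlen, -, hbad⟩ := hc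
  obtain ⟨i, hi, rfl⟩ := (hbad x).1 hx
  have hinterior : ∀ p ∈ badPatterns, ∀ i : Fin p.length, (p.get i).2 = true →
      0 < (i : ℕ) ∧ (i : ℕ) + 1 < p.length := by decide
  obtain ⟨hpos, hlt⟩ := hinterior p hp i hi
  exact ⟨i - 1, by omega, by rw [Nat.sub_add_cancel hpos]⟩

lemma WorkingConditions.mem_ebpSet_of_isBad (hwc : C.WorkingConditions) (hC : C.IsLinear)
    (hcand : C.IsEBPCand m c) (hx : C.IsBad x) :
    x ∈ C.ebpSet m c ∧ ∀ y, C.graph.Adj x y → y ∈ C.ebpSet m c := by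
  obtain ⟨-, -, -, -, -, -, -, hVII⟩ := hwc
  obtain ⟨p, hp, n, b, hb⟩ := hVII ⟨x, hx⟩
  have hmem := hcand.2.1 p hp n b hb
  obtain ⟨i, hi, rfl⟩ := hb.exists_succ_eq hp hx
  refine ⟨hmem (i + 1) (by omega), fun y hy ↦ ?_⟩
  have hne : b i ≠ b (i + 2) := fun h ↦ by
    have := hb.1.1 i (by omega) (i + 2) hi h
    omega
  rcases hC.eq_or_eq_of_adj hne (hb.1.2 i (by omega)).symm (hb.1.2 (i + 1) (by omega)) hy
    with rfl | rfl
  exacts [hmem i (by omega), hmem (i + 2) hi]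

lemma IsChain.farFromBad (hc : C.IsChain m c) (hC : C.IsLinear) (hm : 2 ≤ m)
    (h₁ : C.adjw (c 1) = 0) (h₂ : C.adjw (c 2) = 0)
    (hbad : ∀ x, C.IsBad x → x ∈ C.ebpSet m c) :
    C.FarFromBad (c 0) ∧ C.FarFromBad (c 1) ∧ C.FarFromBad (c 2) := by
  have hadj₁ : C.graph.Adj (c 0) (c 1) := hc.2 0 (by omega)
  have hadj₂ : C.graph.Adj (c 1) (c 2) := hc.2 1 (by omega)
  have hbad₀ : ¬ C.IsBad (c 0) := fun h ↦ (h.adjw_pos_of_adj hC hadj₁).ne' h₁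
  have hbad₁ : ¬ C.IsBad (c 1) := fun h ↦ (h.adjw_pos_of_adj hC hadj₂).ne' h₂
  have hbad₂ : ¬ C.IsBad (c 2) := fun h ↦ (h.adjw_pos_of_adj hC hadj₂.symm).ne' h₁
  refine ⟨⟨hbad₀, fun x hx hx_bad ↦ ?_⟩, .of_adjw_eq_zero hC hbad₁ h₁,
    .of_adjw_eq_zero hC hbad₂ h₂⟩
  obtain ⟨i, hi, rfl⟩ := hbad x hx_bad
  match i with
  | 0 => exact hbad₀ hx_bad
  | 1 => exact hbad₁ hx_bad
  | i + 2 => exact hc.not_adj_zero hC.2 (by omega) hi hx.symm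

lemma WorkingConditions.farFromBad_of_mem_outsidePart (hwc : C.WorkingConditions)
    (hC : C.IsLinear) (hcand : C.IsEBPCand m c) (hy : y ∈ C.OutsidePart m c) :
    C.FarFromBad y := by
  obtain ⟨hchain, -, hfront, hback⟩ := id hcand
  have hmem (x) (hx : C.IsBad x) := hwc.mem_ebpSet_of_isBad hC hcand hx
  rcases hy with (hy | ⟨hleaf, hy⟩) | ⟨hleaf, hy⟩
  · have hy : y ∉ C.ebpSet m c := fun ⟨i, hi, hiy⟩ ↦ hy i hi hiy
    exact ⟨fun hbad ↦ hy (hmem y hbad).1, fun x hxy hbad ↦ hy ((hmem x hbad).2 y hxy)⟩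
  · obtain ⟨hm, h₁, h₂⟩ := hfront.resolve_left hleaf
    obtain ⟨hfar₀, hfar₁, hfar₂⟩ := hchain.farFromBad hC hm h₁ h₂ fun x hx ↦ (hmem x hx).1
    rcases hy with rfl | rfl | rfl <;> assumption
  · obtain ⟨hm, h₁, h₂⟩ := hback.resolve_left hleaf
    obtain ⟨hfar₀, hfar₁, hfar₂⟩ := hchain.reverse.farFromBad hC hm h₁ h₂ fun x hx ↦
      (C.ebpSet_reverse m c).symm ▸ (hmem x hx).1
    rcases hy with rfl | rfl | rfl <;> assumption

end OutsidePart

end Config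

theorem statement4_general (C : Config) (hlin : C.IsLinear) (hwc : C.WorkingConditions)
    (x : C.V) (hx : C.IsBad x) (hwx : 1 ≤ C.adjw x)
    (N : ℕ) (φ : C.V → Fin N → ℤ) (hφ : C.IsEmbedding N φ)
    (m : ℕ) (vc : ℕ → C.V) (hcand : C.IsEBPCand m vc) :
    C.IsStandardOn N φ (C.OutsidePart m vc) := by
  have hstandard := hφ.isStandardOn_farFromBad (hwc.isTame hlin hx hwx)
  exact fun u hu v hv ↦ hstandard u (hwc.farFromBad_of_mem_outsidePart hlin hcand hu)
    v (hwc.farFromBad_of_mem_outsidePart hlin hcand hv)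

/-- Corollary 5.3: if there is a bad vertex of adjusted weight at least `1`, then the
outside part is embedded standardly. -/
theorem statement4 (C : Config) (hlin : C.IsLinear) (hwc : C.WorkingConditions)
    (x : C.V) (hx : C.IsBad x) (hwx : 1 ≤ C.adjw x)
    (N : ℕ) (φ : C.V → Fin N → ℤ) (hφ : C.IsEmbedding N φ)
    (m : ℕ) (vc : ℕ → C.V) (hebp : C.IsExtBadPart m vc) :
    C.IsStandardOn N φ (C.OutsidePart m vc) :=
  statement4_general C hlin hwc x hx hwx N φ hφ m vc hebp.1

end LensPaper
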